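/- If every 3-maximal subgroup of a finite group G is K-𝔘-subnormal in G, then every maximal subgroup of G is either supersoluble or an SDH-group. -/

import Mathlib

open Subgroup

/-- A finite group is supersoluble if it has a normal series, all of whose terms are
normal in the whole group, with cyclic factors. -/
def IsSupersoluble (G : Type*) [Group G] : Prop :=
  ∃ (n : ℕ) (c : Fin (n + 1) → Subgroup G) (hc : ∀ i, (c i).Normal),
    c 0 = ⊥ ∧ c (Fin.last n) = ⊤ ∧
    ∀ i : Fin n, c i.castSucc ≤ c i.succ ∧
      haveI := (hc i.castSucc).subgroupOf (c i.succ)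
      IsCyclic (↥(c i.succ) ⧸ ((c i.castSucc).subgroupOf (c i.succ)))

/-- `H` is a maximal subgroup of `K`, where `H ≤ K` are subgroups of a common group. -/
def IsMaximalIn {G : Type*} [Group G] (H K : Subgroup G) : Prop :=
  H ≤ K ∧ IsCoatom (H.subgroupOf K)

/-- The `n`-maximal subgroups of `G`: `0`-maximal is `G` itself, and an `(n+1)`-maximal
subgroup is a maximal subgroup of some `n`-maximal subgroup. -/
def IsNMaximal {G : Type*} [Group G] : ℕ → Subgroup G → Prop
  | 0, H => H = ⊤
  | n + 1, H => ∃ K : Subgroup G, IsNMaximal n K ∧ IsMaximalIn H K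

/-- `H` is `K`-`𝔘`-subnormal in `K`: there is a chain of subgroups
`H = H₀ ≤ H₁ ≤ ⋯ ≤ Hₜ = K` such that at each step either `H_{i-1}` is normal in `H_i`
or `H_i` modulo the core of `H_{i-1}` in `H_i` is supersoluble. -/
def IsKUSubnormalIn {G : Type*} [Group G] (H K : Subgroup G) : Prop :=
  ∃ (n : ℕ) (c : Fin (n + 1) → Subgroup G),
    c 0 = H ∧ c (Fin.last n) = K ∧
    ∀ i : Fin n, c i.castSucc ≤ c i.succ ∧
      (((c i.castSucc).subgroupOf (c i.succ)).Normal ∨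
        IsSupersoluble (↥(c i.succ) ⧸ ((c i.castSucc).subgroupOf (c i.succ)).normalCore))

/-- `H` is `K`-`𝔘`-subnormal in `G`. -/
def IsKUSubnormal {G : Type*} [Group G] (H : Subgroup G) : Prop :=
  IsKUSubnormalIn H ⊤

/-- `H` is `𝔘`-subnormal in `G`: there is a chain of subgroups
`H = H₀ ≤ H₁ ≤ ⋯ ≤ Hₙ = G` with `H_i` modulo the core of `H_{i-1}` in `H_i`
supersoluble at each step. -/
def IsUSubnormal {G : Type*} [Group G] (H : Subgroup G) : Prop :=
  ∃ (n : ℕ) (c : Fin (n + 1) → Subgroup G),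
    c 0 = H ∧ c (Fin.last n) = ⊤ ∧
    ∀ i : Fin n, c i.castSucc ≤ c i.succ ∧
      IsSupersoluble (↥(c i.succ) ⧸ ((c i.castSucc).subgroupOf (c i.succ)).normalCore)

/-- The supersoluble residual `G^𝔘` of `G`: the intersection of all normal subgroups `N`
of `G` with `G/N` supersoluble. -/
def ssResidual (G : Type*) [Group G] : Subgroup G :=
  ⨅ N ∈ {N : Subgroup G | ∃ hN : N.Normal, haveI := hN; IsSupersoluble (G ⧸ N)}, N

/-- `N` is a minimal normal subgroup of `G`. -/
def IsMinimalNormal {G : Type*} [Group G] (N : Subgroup G) : Prop :=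
  N.Normal ∧ N ≠ ⊥ ∧ ∀ M : Subgroup G, M.Normal → M ≤ N → M ≠ ⊥ → M = N

/-- `G` is minimal nonsupersoluble: not supersoluble, but all proper subgroups are. -/
def IsMinimalNonsupersoluble (G : Type*) [Group G] : Prop :=
  ¬ IsSupersoluble G ∧ ∀ H : Subgroup G, H ≠ ⊤ → IsSupersoluble H

/-- `G` is an `SDH`-group: minimal nonsupersoluble with `G^𝔘` a minimal normal subgroup. -/
def IsSDH (G : Type*) [Group G] : Prop :=
  IsMinimalNonsupersoluble G ∧ IsMinimalNormal (ssResidual G)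

/-- `H` is a Sylow `p`-subgroup of its ambient (finite) group. -/
def IsSylowSubgroup {G : Type*} [Group G] (p : ℕ) (H : Subgroup G) : Prop :=
  IsPGroup p H ∧ ¬ p ∣ H.index

/-- A finite group is Ore dispersive if, enumerating the prime divisors of `|G|`
in decreasing order as `p₁ > p₂ > ⋯ > pₙ`, for every `i` it has a normal subgroup of
order `p₁^{a₁} ⋯ p_i^{a_i}`. -/
def OreDispersive (G : Type*) [Group G] : Prop :=
  ∀ p : ℕ, p.Prime → ∃ N : Subgroup G, N.Normal ∧
    Nat.card N =
      ∏ q ∈ (Nat.card G).primeFactors.filter (fun q => p ≤ q),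
        q ^ (Nat.card G).factorization q

/-- `A/B` is a chief factor of `G`. -/
def IsChiefFactor {G : Type*} [Group G] (A B : Subgroup G) : Prop :=
  A.Normal ∧ B ≤ A ∧ ∃ hB : B.Normal,
    haveI := hB
    IsMinimalNormal (A.map (QuotientGroup.mk' B))

/-- The subgroups `H` and `K` of `G` are conjugate in `G`. -/
def ConjSubgroup {G : Type*} [Group G] (H K : Subgroup G) : Prop :=
  ∃ g : G, K = H.map (MulAut.conj g).toMonoidHom

/-- The Frattini subgroup of a subgroup `H` of `G`, as a subgroup of `G`. -/
def frattiniIn {G : Type*} [Group G] (H : Subgroup G) : Subgroup G :=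
  (frattini H).map H.subtype

/-- `G = P ⋊ (Q ⋊ R)` as an internal statement about subgroups `P`, `Q`, `R` of `G`. -/
def IsInternalSemidirect3 {G : Type*} [Group G] (P Q R : Subgroup G) : Prop :=
  P.Normal ∧ P ⊓ (Q ⊔ R) = ⊥ ∧ P ⊔ Q ⊔ R = ⊤ ∧
    (Q.subgroupOf (Q ⊔ R)).Normal ∧ Q ⊓ R = ⊥

/-- `G = P ⋊ (Q ⋊ (R ⋊ T))` as an internal statement about subgroups of `G`. -/
def IsInternalSemidirect4 {G : Type*} [Group G] (P Q R T : Subgroup G) : Prop :=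
  P.Normal ∧ P ⊓ (Q ⊔ R ⊔ T) = ⊥ ∧ P ⊔ Q ⊔ R ⊔ T = ⊤ ∧
    (Q.subgroupOf (Q ⊔ R ⊔ T)).Normal ∧ Q ⊓ (R ⊔ T) = ⊥ ∧
    (R.subgroupOf (R ⊔ T)).Normal ∧ R ⊓ T = ⊥

/-!
The maximal subgroups `M` of the group in question are *critical*: their proper subgroups are
supersoluble, and each of their `2`-maximal subgroups lies in a proper subgroup `X` that is normal
in `M` or whose core in `M` has supersoluble quotient. This condition passes to quotients.

Let `G` be critical and not supersoluble, with supersoluble residual `R`. A nonabelian simple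
quotient of `G` would have trivial `2`-maximal subgroups, hence cyclic Sylow subgroups, so `G` is
soluble; criticality then says `TR < G` for every `2`-maximal subgroup `T`. Let `K ≤ R` be minimal
normal in `G`. If `K ≠ R`, then `R / K`, the residual of `G / K`, is by induction minimal normal,
and `K` and `R / K` are `p`-groups for the same prime `p`. As supersolubility lifts from
`G / Φ(G)` to `G`, there is a maximal subgroup `L ≥ K` of `G` with `R ≰ L`. Since `TR < G` for all
maximal subgroups `T` of `L`, we have `K ≤ Φ(L)`. Applied in `G / K`, the same inequality shows that
`Φ(L / K)` contains the centralizer of `R / K` in `L / K`, and hence all `p`-subgroups of `L / K`.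
By the Schur-Zassenhaus theorem a Sylow subgroup inside the Frattini subgroup is trivial, so `p`
does not divide the order of `L / K`. Then `K` is a Sylow `p`-subgroup of `L` inside `Φ(L)`, and so
`K = 1`.
-/

section CyclicExtension

variable {G : Type*} [Group G]

theorem le_sup_zpowers_iff_map_mk'_le {N A : Subgroup G} [N.Normal] {x : G} :
    A ≤ N ⊔ zpowers x ↔ A.map (QuotientGroup.mk' N) ≤ zpowers (QuotientGroup.mk' N x) := by
  rw [← MonoidHom.map_zpowers, map_le_iff_le_comap, QuotientGroup.comap_map_mk']

theorem isCyclic_quotient_subgroupOf_iff {N A : Subgroup G} [N.Normal] (hNA : N ≤ A) :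
    IsCyclic (A ⧸ N.subgroupOf A) ↔ ∃ x, A = N ⊔ zpowers x := by
  constructor
  · rintro ⟨q, hq⟩
    obtain ⟨x, rfl⟩ := QuotientGroup.mk_surjective q
    refine ⟨x, le_antisymm (fun z hz => ?_) (sup_le hNA (zpowers_le.2 x.2))⟩
    obtain ⟨k, hk⟩ := hq (QuotientGroup.mk ⟨z, hz⟩)
    have hmem : ((x : G) ^ k)⁻¹ * z ∈ N := by
      simpa [mem_subgroupOf] using
        QuotientGroup.eq.1 ((QuotientGroup.mk_zpow (N.subgroupOf A) x k).trans hk)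
    rw [sup_comm]
    exact mem_sup_of_normal_right.2 ⟨_, ⟨k, rfl⟩, _, hmem, by simp⟩
  · rintro ⟨x, rfl⟩
    have hx : x ∈ N ⊔ zpowers x := mem_sup_right (mem_zpowers x)
    refine ⟨QuotientGroup.mk ⟨x, hx⟩, fun q => ?_⟩
    obtain ⟨⟨z, hz⟩, rfl⟩ := QuotientGroup.mk_surjective q
    obtain ⟨_, ⟨k, rfl⟩, b, hb, rfl⟩ := mem_sup_of_normal_right.1 (sup_comm N _ ▸ hz)
    exact ⟨k, QuotientGroup.eq.2 (by simpa [mem_subgroupOf] using hb)⟩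

theorem exists_mem_le_inf_sup_zpowers {J B : Subgroup G} [J.Normal] {x : G}
    (hB : B ≤ J ⊔ zpowers x) : ∃ y ∈ B, B ≤ J ⊓ B ⊔ zpowers y := by
  have hcyc : IsCyclic (B.map (QuotientGroup.mk' J)) :=
    isCyclic_of_injective _ (inclusion_injective (le_sup_zpowers_iff_map_mk'_le.1 hB))
  obtain ⟨g, hg⟩ := (Subgroup.isCyclic_iff_exists_zpowers_eq_top _).1 hcyc
  obtain ⟨y, hy, rfl⟩ : g ∈ B.map (QuotientGroup.mk' J) := hg ▸ mem_zpowers g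
  refine ⟨y, hy, fun z hz => ?_⟩
  obtain ⟨j, hj, _, ⟨k, rfl⟩, rfl⟩ :=
    mem_sup_of_normal_left.1 (le_sup_zpowers_iff_map_mk'_le.2 hg.ge hz)
  exact mul_mem (mem_sup_left ⟨hj, (mul_mem_cancel_right (zpow_mem hy k)).1 hz⟩)
    (mem_sup_right ⟨k, rfl⟩)

end CyclicExtension

/-- `IsSupersolubleMod K` says, for a normal subgroup `K` of a finite group `G`, that `G ⧸ K` is
supersoluble: every proper normal subgroup of `G` above `K` has a cyclic extension that is normal
in `G`. No quotient type is formed, so the property can be moved freely along homomorphisms. -/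
def IsSupersolubleMod {G : Type*} [Group G] (K : Subgroup G) : Prop :=
  ∀ N : Subgroup G, N.Normal → K ≤ N → N ≠ ⊤ → ∃ x ∉ N, (N ⊔ zpowers x).Normal

namespace IsSupersolubleMod

variable {G H : Type*} [Group G] [Group H] {K L : Subgroup G}

theorem mono (hK : IsSupersolubleMod K) (hKL : K ≤ L) : IsSupersolubleMod L :=
  fun N hN hLN => hK N hN (hKL.trans hLN)

theorem of_commutator_le (hK : commutator G ≤ K) : IsSupersolubleMod K := by
  intro N _ hKN hN
  obtain ⟨x, -, hx⟩ := SetLike.exists_of_lt hN.lt_top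
  exact ⟨x, hx, .of_commutator_le G ((hK.trans hKN).trans le_sup_left)⟩

theorem of_isCoatom (hK : IsCoatom K) : IsSupersolubleMod K := by
  intro N _ hKN hN
  obtain ⟨x, -, hx⟩ := SetLike.exists_of_lt hN.lt_top
  have htop : N ⊔ zpowers x = ⊤ :=
    hK.2 _ (hKN.trans_lt (left_lt_sup.2 (zpowers_le.not.2 hx)))
  exact ⟨x, hx, htop ▸ inferInstance⟩

theorem of_sup_zpowers {y : G} (hy : (K ⊔ zpowers y).Normal)
    (h : IsSupersolubleMod (K ⊔ zpowers y)) : IsSupersolubleMod K := by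
  intro N _ hKN hN
  by_cases hyN : y ∈ N
  · exact h N ‹_› (sup_le hKN (zpowers_le.2 hyN)) hN
  · have heq : N ⊔ zpowers y = N ⊔ (K ⊔ zpowers y) := by rw [← sup_assoc, sup_eq_left.2 hKN]
    exact ⟨y, hyN, heq ▸ inferInstance⟩

theorem _root_.isSupersolubleMod_comap_iff {f : G →* H} (hf : Function.Surjective f)
    {K : Subgroup H} : IsSupersolubleMod (K.comap f) ↔ IsSupersolubleMod K := by
  constructor
  · intro h N _ hKN hN
    obtain ⟨x, hx, hnormal⟩ := h (N.comap f) inferInstance (comap_mono hKN)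
      (fun htop => hN (comap_injective hf (htop.trans (comap_top f).symm)))
    refine ⟨f x, hx, ?_⟩
    rw [← map_comap_eq_self_of_surjective hf N, ← MonoidHom.map_zpowers, ← Subgroup.map_sup]
    exact hnormal.map f hf
  · intro h N hnormal hKN hN
    have hker : f.ker ≤ N := (f.ker_le_comap K).trans hKN
    have hcomap : (N.map f).comap f = N := comap_map_eq_self hker
    obtain ⟨y, hy, hsup⟩ := h (N.map f) (hnormal.map f hf)
      ((comap_le_comap_of_surjective hf).1 (by rwa [hcomap]))
      (fun htop => hN (by rw [← hcomap, htop, comap_top]))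
    obtain ⟨x, rfl⟩ := hf y
    refine ⟨x, fun hx => hy (mem_map_of_mem f hx), ?_⟩
    rw [← comap_map_eq_self (hker.trans (le_sup_left : N ≤ N ⊔ zpowers x)), Subgroup.map_sup,
      MonoidHom.map_zpowers]
    exact hsup.comap f

theorem map (h : IsSupersolubleMod K) {f : G →* H} (hf : Function.Surjective f) :
    IsSupersolubleMod (K.map f) :=
  (isSupersolubleMod_comap_iff hf).1 (h.mono (le_comap_map f K))

section Finite

variable [Finite G]

-- `J` is taken maximal among the normal subgroups above `K` with `J ⊓ H ≤ N`: its cyclic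
-- extension meets `H` outside `N`.
theorem exists_sup_zpowers_eq_sup_inf [K.Normal] (hK : IsSupersolubleMod K) {N H : Subgroup G}
    (hKH : K ⊓ H ≤ N) (hHN : ¬ H ≤ N) :
    ∃ J : Subgroup G, J.Normal ∧ ∃ y ∈ H, y ∉ N ∧ N ⊔ zpowers y = N ⊔ J ⊓ H := by
  obtain ⟨J, ⟨hJ, hKJ, hJH⟩, hmax⟩ :=
    (Set.toFinite {J : Subgroup G | J.Normal ∧ K ≤ J ∧ J ⊓ H ≤ N}).exists_maximal
      ⟨K, ‹_›, le_rfl, hKH⟩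
  obtain ⟨x, hxJ, hnormal⟩ :=
    hK J hJ hKJ (by rintro rfl; exact hHN (top_inf_eq H ▸ hJH))
  have hnot : ¬ (J ⊔ zpowers x) ⊓ H ≤ N := fun h =>
    hxJ (hmax ⟨hnormal, hKJ.trans le_sup_left, h⟩ le_sup_left (mem_sup_right (mem_zpowers x)))
  obtain ⟨y, hy, hcyc⟩ :=
    exists_mem_le_inf_sup_zpowers (inf_le_left : (J ⊔ zpowers x) ⊓ H ≤ J ⊔ zpowers x)
  have hle : (J ⊔ zpowers x) ⊓ H ≤ N ⊔ zpowers y :=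
    hcyc.trans (sup_le_sup_right ((inf_le_inf_left J inf_le_right).trans hJH) _)
  refine ⟨_, hnormal, y, hy.2, fun hyN => hnot (hle.trans (sup_le le_rfl (zpowers_le.2 hyN))),
    le_antisymm (sup_le_sup_left (zpowers_le.2 hy) N) (sup_le le_sup_left hle)⟩

theorem exists_normal_sup_zpowers [K.Normal] (hK : IsSupersolubleMod K) {N H : Subgroup G}
    [N.Normal] [H.Normal] (hKH : K ⊓ H ≤ N) (hHN : ¬ H ≤ N) :
    ∃ y ∈ H, y ∉ N ∧ (N ⊔ zpowers y).Normal := by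
  obtain ⟨J, _, y, hyH, hyN, heq⟩ := hK.exists_sup_zpowers_eq_sup_inf hKH hHN
  exact ⟨y, hyH, hyN, heq ▸ inferInstance⟩

theorem inf [K.Normal] [L.Normal] (hK : IsSupersolubleMod K) (hL : IsSupersolubleMod L) :
    IsSupersolubleMod (K ⊓ L) := by
  intro N _ hKL hN
  by_cases hLN : L ≤ N
  · exact hL N ‹_› hLN hN
  · obtain ⟨y, -, hyN, hnormal⟩ := hK.exists_normal_sup_zpowers hKL hLN
    exact ⟨y, hyN, hnormal⟩

theorem subgroupOf [K.Normal] (hK : IsSupersolubleMod K) (H : Subgroup G) :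
    IsSupersolubleMod (K.subgroupOf H) := by
  intro N _ hKN hN
  obtain ⟨J, _, y, hyH, hyN, heq⟩ :=
    hK.exists_sup_zpowers_eq_sup_inf (H := H) (N := N.map H.subtype)
      (by rw [← subgroupOf_map_subtype]; exact map_mono hKN)
      (fun h => hN (top_le_iff.1 ((map_le_map_iff_of_injective H.subtype_injective).1
        ((map_subtype_le _).trans h))))
  refine ⟨⟨y, hyH⟩, fun hy => hyN ⟨_, hy, rfl⟩, ?_⟩
  have hsup : N ⊔ zpowers (⟨y, hyH⟩ : H) = N ⊔ J.subgroupOf H := by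
    apply map_injective H.subtype_injective
    rwa [Subgroup.map_sup, Subgroup.map_sup, MonoidHom.map_zpowers, subgroupOf_map_subtype]
  exact hsup ▸ inferInstance

theorem comap [K.Normal] (hK : IsSupersolubleMod K) (f : H →* G) :
    IsSupersolubleMod (K.comap f) :=
  (isSupersolubleMod_comap_iff f.rangeRestrict_surjective).2 (hK.subgroupOf f.range)

theorem exists_series (hK : IsSupersolubleMod K) {N : Subgroup G} (hN : N.Normal) (hKN : K ≤ N) :
    ∃ (n : ℕ) (c : Fin (n + 1) → Subgroup G), (∀ i, (c i).Normal) ∧ c 0 = N ∧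
      c (Fin.last n) = ⊤ ∧ ∀ i : Fin n, c i.castSucc ≤ c i.succ ∧
        ∃ x, c i.succ = c i.castSucc ⊔ zpowers x := by
  induction N using WellFoundedGT.induction with
  | ind N ih =>
    by_cases htop : N = ⊤
    · exact ⟨0, fun _ => N, fun _ => hN, rfl, htop, fun i => i.elim0⟩
    obtain ⟨x, hx, hnormal⟩ := hK N hN hKN htop
    obtain ⟨n, c, hc, hzero, hlast, hstep⟩ :=
      ih _ (left_lt_sup.2 (zpowers_le.not.2 hx)) hnormal (hKN.trans le_sup_left)
    refine ⟨n + 1, Fin.cons N c, Fin.cases hN hc, rfl, hlast, Fin.cases ?_ hstep⟩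
    exact ⟨le_sup_left.trans hzero.ge, x, hzero⟩

theorem _root_.isSupersolubleMod_bot_iff :
    IsSupersolubleMod (⊥ : Subgroup G) ↔ IsSupersoluble G := by
  constructor
  · intro h
    obtain ⟨n, c, hc, hzero, hlast, hstep⟩ := h.exists_series inferInstance le_rfl
    exact ⟨n, c, hc, hzero, hlast, fun i => ⟨(hstep i).1,
      (isCyclic_quotient_subgroupOf_iff (hstep i).1).2 (hstep i).2⟩⟩
  · rintro ⟨n, c, hc, hzero, hlast, hstep⟩ N _ - hN
    obtain ⟨i, hi, hi'⟩ : ∃ i : Fin n, c i.castSucc ≤ N ∧ ¬ c i.succ ≤ N := by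
      by_contra! hall
      exact hN (top_le_iff.1 (hlast ▸ Fin.induction (hzero ▸ bot_le) hall (Fin.last n)))
    obtain ⟨x, hx⟩ := (isCyclic_quotient_subgroupOf_iff (hstep i).1).1 (hstep i).2
    have heq : N ⊔ zpowers x = N ⊔ c i.succ := by rw [hx, ← sup_assoc, sup_eq_left.2 hi]
    have := hc i.succ
    exact ⟨x, fun hxN => hi' (hx ▸ sup_le hi (zpowers_le.2 hxN)), heq ▸ inferInstance⟩

theorem _root_.isSupersoluble_quotient_iff [K.Normal] :
    IsSupersoluble (G ⧸ K) ↔ IsSupersolubleMod K := by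
  rw [← isSupersolubleMod_bot_iff, ← isSupersolubleMod_comap_iff (QuotientGroup.mk'_surjective K),
    MonoidHom.comap_bot, QuotientGroup.ker_mk']

end Finite

end IsSupersolubleMod

section ssResidual

variable {G H : Type*} [Group G] [Group H]

instance : (ssResidual G).Normal :=
  normal_iInf_normal fun _ => normal_iInf_normal fun h => h.choose

variable [Finite G]

theorem ssResidual_le {N : Subgroup G} [N.Normal] (hN : IsSupersolubleMod N) :
    ssResidual G ≤ N :=
  iInf₂_le N ⟨‹_›, isSupersoluble_quotient_iff.2 hN⟩

theorem isSupersolubleMod_ssResidual : IsSupersolubleMod (ssResidual G) := by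
  obtain ⟨R, ⟨hR, hRmod⟩, hmin⟩ :=
    (Set.toFinite {J : Subgroup G | J.Normal ∧ IsSupersolubleMod J}).exists_minimal
      ⟨⊤, inferInstance, .of_commutator_le le_top⟩
  refine hRmod.mono (le_iInf₂ fun N ⟨hN, hNss⟩ => ?_)
  have hNmod : IsSupersolubleMod N := isSupersoluble_quotient_iff.1 hNss
  exact (hmin ⟨inferInstance, hRmod.inf hNmod⟩ inf_le_left).trans inf_le_right

theorem map_ssResidual {f : G →* H} (hf : Function.Surjective f) :
    (ssResidual G).map f = ssResidual H := by
  have : Finite H := .of_surjective f hf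
  have : ((ssResidual G).map f).Normal := Normal.map inferInstance f hf
  refine le_antisymm (map_le_iff_le_comap.2 (ssResidual_le ?_)) (ssResidual_le ?_)
  · exact (isSupersolubleMod_comap_iff hf).2 isSupersolubleMod_ssResidual
  · exact isSupersolubleMod_ssResidual.map hf

end ssResidual

section CoprimePowers

variable {G : Type*} [Group G] {H P : Subgroup G}

theorem mem_of_pow_mem_of_coprime {m n : ℕ} (hmn : m.Coprime n) {x : G} (hm : x ^ m ∈ H)
    (hn : x ^ n ∈ H) : x ∈ H := by
  obtain ⟨a, b, hab⟩ := Nat.isCoprime_iff_coprime.2 hmn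
  have hx : x = (x ^ m) ^ a * (x ^ n) ^ b := by
    rw [← zpow_natCast, ← zpow_natCast, ← zpow_mul, ← zpow_mul, ← zpow_add, mul_comm (m : ℤ),
      mul_comm (n : ℤ), hab, zpow_one]
  exact hx ▸ mul_mem (zpow_mem hm a) (zpow_mem hn b)

theorem le_of_isPGroup_of_pow_mem {p m : ℕ} (hP : IsPGroup p P) (hpm : p.Coprime m)
    (hpow : ∀ x ∈ P, x ^ m ∈ H) : P ≤ H := by
  intro x hx
  obtain ⟨k, hk⟩ := hP ⟨x, hx⟩
  have hxk : x ^ p ^ k = 1 := congrArg Subtype.val hk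
  exact mem_of_pow_mem_of_coprime (hpm.symm.pow_right k) (hpow x hx) (hxk ▸ one_mem H)

end CoprimePowers

section AbelianExpResidual

variable {G H : Type*} [Group G] [Group H] {n : ℕ}

/-- The residual of `G` for the class of abelian groups of exponent dividing `n`. For `n = p - 1`
it acts trivially on every normal subgroup of order `p`. -/
def abelianExpResidual (n : ℕ) (G : Type*) [Group G] : Subgroup G :=
  commutator G ⊔ closure (Set.range (· ^ n))

theorem pow_mem_abelianExpResidual (n : ℕ) (g : G) : g ^ n ∈ abelianExpResidual n G :=
  mem_sup_right (subset_closure ⟨g, rfl⟩)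

theorem map_abelianExpResidual_le (f : G →* H) :
    (abelianExpResidual n G).map f ≤ abelianExpResidual n H := by
  rw [abelianExpResidual, Subgroup.map_sup, MonoidHom.map_closure, commutator_def, map_commutator]
  refine sup_le_sup (commutator_mono le_top le_top) (closure_mono ?_)
  rintro _ ⟨_, ⟨g, rfl⟩, rfl⟩
  exact ⟨f g, (map_pow f g n).symm⟩

instance : (abelianExpResidual n G).Characteristic :=
  characteristic_iff_map_le.2 fun φ => map_abelianExpResidual_le φ.toMonoidHom

theorem abelianExpResidual_le_ker {A : Type*} [CommGroup A] (φ : G →* A)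
    (hA : ∀ a : A, a ^ n = 1) : abelianExpResidual n G ≤ φ.ker := by
  refine sup_le (Abelianization.commutator_subset_ker φ) ((closure_le _).2 ?_)
  rintro _ ⟨g, rfl⟩
  exact (map_pow φ g n).trans (hA (φ g))

theorem ker_conjNormal (N : Subgroup G) [N.Normal] :
    (MulAut.conjNormal : G →* MulAut N).ker = centralizer N := by
  ext g
  simp only [MonoidHom.mem_ker, MulEquiv.ext_iff, Subtype.ext_iff, MulAut.conjNormal_apply,
    MulAut.one_apply, Subtype.forall, mem_centralizer_iff, SetLike.mem_coe, mul_inv_eq_iff_eq_mul]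
  simp only [eq_comm]

-- `Aut (zpowers y)` is isomorphic to `(ZMod p)ˣ`.
theorem abelianExpResidual_le_centralizer_zpowers {p : ℕ} (hp : p.Prime) {y : G}
    (hy : orderOf y = p) [(zpowers y).Normal] :
    abelianExpResidual (p - 1) G ≤ centralizer (zpowers y : Set G) := by
  subst hy
  have : Fact (Nat.card (zpowers y)).Prime := ⟨(Nat.card_zpowers y).symm ▸ hp⟩
  rw [← ker_conjNormal,
    ← MonoidHom.ker_mulEquiv_comp _ (IsCyclic.mulAutMulEquiv (zpowers y))]
  refine abelianExpResidual_le_ker _ fun a => ?_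
  rw [← Nat.card_zpowers, ZMod.units_pow_card_sub_one_eq_one]

end AbelianExpResidual

theorem card_quotient_lt_card {G : Type*} [Group G] [Finite G] {N : Subgroup G} (hN : N ≠ ⊥) :
    Nat.card (G ⧸ N) < Nat.card G := by
  rw [card_eq_card_quotient_mul_card_subgroup N]
  exact lt_mul_of_one_lt_right Nat.card_pos ((one_lt_card_iff_ne_bot N).2 hN)

namespace IsSupersoluble

variable {G H : Type*} [Group G] [Finite G] [Group H]

theorem of_surjective (hG : IsSupersoluble G) {f : G →* H} (hf : Function.Surjective f) :
    IsSupersoluble H := by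
  have : Finite H := .of_surjective f hf
  rw [← isSupersolubleMod_bot_iff, ← isSupersolubleMod_comap_iff hf]
  exact (isSupersolubleMod_bot_iff.2 hG).mono bot_le

theorem subgroup (hG : IsSupersoluble G) (K : Subgroup G) : IsSupersoluble K := by
  rw [← isSupersolubleMod_bot_iff, ← bot_subgroupOf]
  exact (isSupersolubleMod_bot_iff.2 hG).subgroupOf K

theorem exists_prime_normal_zpowers (hG : IsSupersoluble G) {N : Subgroup G} [N.Normal]
    (hN : N ≠ ⊥) : ∃ y ∈ N, (orderOf y).Prime ∧ (zpowers y).Normal := by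
  obtain ⟨y, hyN, hy, hnormal⟩ :=
    (isSupersolubleMod_bot_iff.2 hG).exists_normal_sup_zpowers (N := ⊥) (H := N)
      inf_le_left (le_bot_iff.not.2 hN)
  rw [bot_sup_eq] at hnormal
  rw [mem_bot, ← orderOf_eq_one_iff] at hy
  obtain ⟨p, hp, m, hm⟩ := Nat.exists_prime_and_dvd hy
  have hm0 : m ≠ 0 := fun h => (orderOf_pos y).ne' (by rw [hm, h, mul_zero])
  have hord : orderOf (y ^ m) = p := by
    rw [orderOf_pow_of_dvd hm0 ⟨p, hm.trans (mul_comm p m)⟩, hm,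
      Nat.mul_div_cancel _ (Nat.pos_of_ne_zero hm0)]
  refine ⟨y ^ m, pow_mem hyN m, hord ▸ hp, ⟨fun z hz g => ?_⟩⟩
  obtain ⟨k, rfl⟩ := mem_zpowers_iff.1 hz
  obtain ⟨j, hj⟩ := mem_zpowers_iff.1 (hnormal.conj_mem y (mem_zpowers y) g)
  refine mem_zpowers_iff.2 ⟨j * k, ?_⟩
  rw [← conj_zpow, ← conj_pow, ← hj]
  simp only [← zpow_natCast, ← zpow_mul]
  ring_nf

universe u

theorem induction_zpowers {motive : ∀ (G : Type u) [Group G], Prop}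
    (subsingleton : ∀ (G : Type u) [Group G] [Subsingleton G], motive G)
    (quotient : ∀ (G : Type u) [Group G] [Finite G] (y : G) [(zpowers y).Normal],
      (orderOf y).Prime → motive (G ⧸ zpowers y) → motive G)
    {G : Type u} [Group G] [Finite G] (hG : IsSupersoluble G) : motive G := by
  induction hn : Nat.card G using Nat.strong_induction_on generalizing G with
  | _ n ih =>
    rcases subsingleton_or_nontrivial G with _ | _
    · exact subsingleton G
    obtain ⟨y, -, hy, _⟩ := hG.exists_prime_normal_zpowers (top_ne_bot : (⊤ : Subgroup G) ≠ ⊥)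
    have hne : zpowers y ≠ ⊥ :=
      (one_lt_card_iff_ne_bot _).1 (hy.one_lt.trans_eq (Nat.card_zpowers y).symm)
    exact quotient G y hy (ih _ (hn ▸ card_quotient_lt_card hne)
      (hG.of_surjective (QuotientGroup.mk'_surjective _)) rfl)

theorem isSolvable (hG : IsSupersoluble G) : Group.IsSolvable G := by
  refine induction_zpowers (motive := fun G _ => Group.IsSolvable G) (fun _ _ _ => inferInstance)
    (fun G _ _ y _ _ _ => ?_) hG
  exact Group.isSolvable_of_ker_le_range (zpowers y).subtype (QuotientGroup.mk' (zpowers y))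
    (by rw [QuotientGroup.ker_mk', range_subtype])

end IsSupersoluble

theorem zpowers_le_normalizer_sylow {G : Type*} [Group G] {p : ℕ} [Fact p.Prime]
    (P : Sylow p G) {y : G} [(zpowers y).Normal] (hy : (orderOf y).Prime) (hyp : orderOf y ≤ p) :
    zpowers y ≤ normalizer (P : Set G) := by
  have hp : p.Prime := Fact.out
  rcases hyp.eq_or_lt with heq | hlt
  · have hpgroup : IsPGroup p (zpowers y) :=
      .of_card (n := 1) (by rw [Nat.card_zpowers, heq, pow_one])
    exact (hpgroup.le_sylow_of_normal P).trans le_normalizer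
  · have hcop : p.Coprime (orderOf y - 1) :=
      Nat.coprime_of_lt_prime (Nat.sub_ne_zero_of_lt hy.one_lt) (by omega) hp
    have hP : (P : Subgroup G) ≤ centralizer (zpowers y : Set G) :=
      le_of_isPGroup_of_pow_mem P.isPGroup' hcop fun x _ =>
        abelianExpResidual_le_centralizer_zpowers hy rfl (pow_mem_abelianExpResidual _ x)
    exact (le_centralizer_iff.1 hP).trans (centralizer_le_normalizer _)

theorem IsSupersoluble.normal_sylow {G : Type*} [Group G] [Finite G] (hG : IsSupersoluble G)
    {p : ℕ} [Fact p.Prime] (hmax : ∀ q : ℕ, q.Prime → q ∣ Nat.card G → q ≤ p) (P : Sylow p G) :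
    (P : Subgroup G).Normal := by
  revert hmax P
  refine induction_zpowers (motive := fun G _ => (∀ q : ℕ, q.Prime → q ∣ Nat.card G → q ≤ p) →
    ∀ P : Sylow p G, (P : Subgroup G).Normal) (fun G _ _ _ P => ?_) (fun G _ _ y _ hy ih => ?_) hG
  · rw [Subsingleton.elim (P : Subgroup G) ⊥]
    infer_instance
  intro hmax P
  have hcard : Nat.card G = Nat.card (G ⧸ zpowers y) * orderOf y := by
    rw [card_eq_card_quotient_mul_card_subgroup (zpowers y), Nat.card_zpowers]
  have hnormal : (zpowers y ⊔ P).Normal := by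
    have := ih (fun q hq hdvd => hmax q hq (hcard ▸ hdvd.mul_right _))
      (P.mapSurjective (QuotientGroup.mk'_surjective (zpowers y)))
    rw [← QuotientGroup.comap_map_mk', ← Sylow.coe_mapSurjective]
    exact this.comap _
  have hy_le := zpowers_le_normalizer_sylow P hy (hmax _ hy (hcard ▸ dvd_mul_left _ _))
  have htop := P.normalizer_sup_eq_top' (le_sup_right : P ≤ zpowers y ⊔ P)
  exact normalizer_eq_top_iff.1 (top_le_iff.1 (htop ▸ sup_le le_rfl (sup_le hy_le le_normalizer)))

section CentralExtension

variable {E H : Type*} [Group E] [Group H] [Finite H] {f : E →* H}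

-- The transfer into the center is the power map with exponent the index of the center.
theorem mul_pow_card_of_ker_le_center (hf : f.ker ≤ center E) (a b : E) :
    (a * b) ^ Nat.card H = a ^ Nat.card H * b ^ Nat.card H := by
  have hdvd : (center E).index ∣ Nat.card H :=
    (index_dvd_of_le hf).trans (index_ker f ▸ card_subgroup_dvd_card f.range)
  have : (center E).FiniteIndex := ⟨ne_zero_of_dvd_ne_zero Nat.card_pos.ne' hdvd⟩
  have htransfer : (a * b) ^ (center E).index = a ^ (center E).index * b ^ (center E).index :=
    congrArg Subtype.val (map_mul (MonoidHom.transferCenterPow E) a b)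
  have hcomm : Commute (a ^ (center E).index) (b ^ (center E).index) :=
    mem_center_iff.1 (MonoidHom.transferCenterPow E b).2 _
  obtain ⟨j, hj⟩ := hdvd
  rw [hj, pow_mul, pow_mul, pow_mul, htransfer, hcomm.mul_pow]

theorem exists_characteristic_mem_iff_pow_card_eq_one (hf : f.ker ≤ center E) :
    ∃ K : Subgroup E, K.Characteristic ∧ ∀ x, x ∈ K ↔ x ^ Nat.card H = 1 := by
  refine ⟨(MonoidHom.mk' (· ^ Nat.card H) (mul_pow_card_of_ker_le_center hf)).ker,
    characteristic_iff_map_le.2 ?_, fun x => Iff.rfl⟩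
  rintro φ _ ⟨x, hx : x ^ Nat.card H = 1, rfl⟩
  exact (map_pow φ x _).symm.trans ((congrArg φ hx).trans (map_one φ))

end CentralExtension

section NormalComplement

theorem pow_orderOf_eq_one_of_mem_zpowers {G : Type*} [Group G] {x y : G} (hx : x ∈ zpowers y) :
    x ^ orderOf y = 1 :=
  orderOf_dvd_iff_pow_eq_one.1 (orderOf_dvd_of_mem_zpowers hx)

theorem coprime_card_of_forall_pow_eq_one {G : Type*} [Group G] [Finite G] {p : ℕ}
    [Fact p.Prime] (hG : ∀ x : G, x ^ p = 1 → x = 1) : p.Coprime (Nat.card G) := by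
  rw [Nat.Prime.coprime_iff_not_dvd Fact.out]
  intro hdvd
  obtain ⟨x, hx⟩ := exists_prime_orderOf_dvd_card' p hdvd
  have hone : x = 1 := hG x (hx ▸ pow_orderOf_eq_one x)
  exact (Fact.out : p.Prime).one_lt.ne (by rw [← hx, hone, orderOf_one])

/-- `IsPNilpotentIn p D` says, for a normal subgroup `D` of `G`, that `D` is `p`-nilpotent: modulo a
normal subgroup of `G` without elements of order `p`, it is a `p`-group. That normal subgroup need
not lie in `D`, since it can be intersected with it. -/
def IsPNilpotentIn {G : Type*} [Group G] (p : ℕ) (D : Subgroup G) : Prop :=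
  ∃ N : Subgroup G, N.Normal ∧ (∀ x ∈ N, x ^ p = 1 → x = 1) ∧ ∀ d ∈ D, ∃ k, d ^ p ^ k ∈ N

variable {G : Type*} [Group G] {p : ℕ} {y : G} [(zpowers y).Normal]

-- The preimage `E` of `Q` in `centralizer (zpowers y)` is a central extension of a `p'`-group, and
-- the `p'`-elements of `E` form a characteristic subgroup.
theorem isPNilpotentIn_abelianExpResidual_of_orderOf_eq [Finite G] [Fact p.Prime]
    (hy : orderOf y = p)
    (h : IsPNilpotentIn p (abelianExpResidual (p - 1) (G ⧸ zpowers y))) :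
    IsPNilpotentIn p (abelianExpResidual (p - 1) G) := by
  obtain ⟨Q, _, hQp, hQ⟩ := h
  set E : Subgroup G := Q.comap (QuotientGroup.mk' (zpowers y)) ⊓ centralizer (zpowers y : Set G)
  let f : E →* Q := ((QuotientGroup.mk' (zpowers y)).comp E.subtype).codRestrict Q fun x => x.2.1
  have hker : ∀ x : E, x ∈ f.ker ↔ (x : G) ∈ zpowers y := fun x =>
    Subtype.ext_iff.trans (QuotientGroup.eq_one_iff (x : G))
  have hcenter : f.ker ≤ center E := fun x hx => mem_center_iff.2 fun g =>
    Subtype.ext (mem_centralizer_iff.1 g.2.2 x ((hker x).1 hx)).symm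
  obtain ⟨K, _, hK⟩ := exists_characteristic_mem_iff_pow_card_eq_one hcenter
  refine ⟨K.map E.subtype, inferInstance, ?_, fun d hd => ?_⟩
  · rintro _ ⟨x, hx, rfl⟩ hxp
    have hcop : p.Coprime (Nat.card Q) := coprime_card_of_forall_pow_eq_one fun z hz =>
      Subtype.ext (hQp z z.2 (congrArg Subtype.val hz))
    exact congrArg Subtype.val ((pow_eq_one_iff_of_coprime hcop).1 ⟨Subtype.ext hxp, (hK x).1 hx⟩)
  · obtain ⟨k, hk⟩ := hQ (QuotientGroup.mk' (zpowers y) d)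
      (map_abelianExpResidual_le _ (mem_map_of_mem _ hd))
    have hdE : d ^ p ^ k ∈ E :=
      ⟨hk, pow_mem (abelianExpResidual_le_centralizer_zpowers Fact.out hy hd) _⟩
    have hmem : (⟨_, hdE⟩ : E) ^ Nat.card Q ∈ f.ker :=
      (map_pow f _ _).trans pow_card_eq_one'
    refine ⟨k + 1, ⟨⟨_, hdE⟩ ^ p, (hK _).2 (Subtype.ext ?_), ?_⟩⟩
    · have hpow : ((d ^ p ^ k) ^ Nat.card Q) ^ orderOf y = 1 :=
        pow_orderOf_eq_one_of_mem_zpowers ((hker _).1 hmem)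
      rw [hy] at hpow
      rw [pow_right_comm]
      exact hpow
    · exact (pow_mul d _ _).symm

theorem isPNilpotentIn_abelianExpResidual_of_orderOf_ne (hp : p.Prime) (hy : (orderOf y).Prime)
    (hyp : orderOf y ≠ p) (h : IsPNilpotentIn p (abelianExpResidual (p - 1) (G ⧸ zpowers y))) :
    IsPNilpotentIn p (abelianExpResidual (p - 1) G) := by
  obtain ⟨Q, _, hQp, hQ⟩ := h
  refine ⟨Q.comap (QuotientGroup.mk' (zpowers y)), inferInstance, fun x hx hxp => ?_,
    fun d hd => hQ (QuotientGroup.mk' (zpowers y) d)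
      (map_abelianExpResidual_le _ (mem_map_of_mem _ hd))⟩
  have hx_one : QuotientGroup.mk' (zpowers y) x = 1 :=
    hQp _ hx (by rw [← map_pow, hxp, map_one])
  exact (pow_eq_one_iff_of_coprime ((Nat.coprime_primes hp hy).2 hyp.symm)).1
    ⟨hxp, pow_orderOf_eq_one_of_mem_zpowers ((QuotientGroup.eq_one_iff x).1 hx_one)⟩

end NormalComplement

theorem IsSupersoluble.isPNilpotentIn_abelianExpResidual {G : Type*} [Group G] [Finite G]
    (hG : IsSupersoluble G) {p : ℕ} [Fact p.Prime] :
    IsPNilpotentIn p (abelianExpResidual (p - 1) G) := by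
  refine induction_zpowers (motive := fun G _ => IsPNilpotentIn p (abelianExpResidual (p - 1) G))
    (fun G _ _ => ⟨⊥, inferInstance, fun x _ _ => Subsingleton.elim x 1, fun d _ =>
      ⟨0, mem_bot.2 (Subsingleton.elim _ 1)⟩⟩) (fun G _ _ y _ hy h => ?_) hG
  by_cases hyp : orderOf y = p
  · exact isPNilpotentIn_abelianExpResidual_of_orderOf_eq hyp h
  · exact isPNilpotentIn_abelianExpResidual_of_orderOf_ne Fact.out hy hyp h

section MinimalNormal

variable {G : Type*} [Group G] {p : ℕ} {V : Subgroup G}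

/-- `IsElementaryAbelian p A` says, for a prime `p`, that `A` is an elementary abelian `p`-group. -/
structure IsElementaryAbelian (p : ℕ) (A : Type*) [Group A] : Prop where
  isMulCommutative : IsMulCommutative A
  pow_eq_one : ∀ a : A, a ^ p = 1

theorem IsElementaryAbelian.isPGroup {A : Type*} [Group A] (hA : IsElementaryAbelian p A) :
    IsPGroup p A :=
  fun a => ⟨1, by rw [pow_one, hA.pow_eq_one]⟩

theorem exists_isMinimalNormal_le [Finite G] {N : Subgroup G} [N.Normal] (hN : N ≠ ⊥) :
    ∃ V ≤ N, IsMinimalNormal V := by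
  obtain ⟨V, ⟨hV, hVb, hVN⟩, hmin⟩ :=
    (Set.toFinite {J : Subgroup G | J.Normal ∧ J ≠ ⊥ ∧ J ≤ N}).exists_minimal ⟨N, ‹_›, hN, le_rfl⟩
  exact ⟨V, hVN, hV, hVb, fun M hM hMV hMb =>
    hMV.antisymm (hmin ⟨hM, hMb, hMV.trans hVN⟩ hMV)⟩

namespace IsMinimalNormal

theorem le_of_inf_ne_bot (hV : IsMinimalNormal V) {W : Subgroup G} [W.Normal] (h : V ⊓ W ≠ ⊥) :
    V ≤ W :=
  have := hV.1
  inf_eq_left.1 (hV.2.2 _ inferInstance inf_le_left h)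

theorem eq_top_of_characteristic (hV : IsMinimalNormal V) {K : Subgroup V} [K.Characteristic]
    (hK : K ≠ ⊥) : K = ⊤ := by
  have := hV.1
  apply map_injective V.subtype_injective
  rw [← MonoidHom.range_eq_map, range_subtype]
  exact hV.2.2 _ inferInstance (map_subtype_le K)
    ((map_eq_bot_iff_of_injective K V.subtype_injective).not.2 hK)

theorem isMulCommutative [Group.IsSolvable G] (hV : IsMinimalNormal V) : IsMulCommutative V := by
  have : Nontrivial V := (nontrivial_iff_ne_bot V).2 hV.2.1
  rw [← commutator_eq_bot_iff]
  by_contra h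
  exact (Group.IsSolvable.commutator_lt_top_of_nontrivial V).ne (hV.eq_top_of_characteristic h)

open scoped IsMulCommutative in
theorem exists_isElementaryAbelian [Finite G] [Group.IsSolvable G] (hV : IsMinimalNormal V) :
    ∃ p : ℕ, p.Prime ∧ IsElementaryAbelian p V := by
  have : IsMulCommutative V := hV.isMulCommutative
  obtain ⟨p, hp, hdvd⟩ := Nat.exists_prime_and_dvd (card_eq_one.not.2 hV.2.1)
  have : Fact p.Prime := ⟨hp⟩
  obtain ⟨x, hx⟩ := exists_prime_orderOf_dvd_card' p hdvd
  have hchar : (powMonoidHom p : V →* V).ker.Characteristic := characteristic_iff_map_le.2 <| by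
    rintro φ _ ⟨a, ha : a ^ p = 1, rfl⟩
    exact (map_pow φ a p).symm.trans ((congrArg φ ha).trans (map_one φ))
  have hxp : x ∈ (powMonoidHom p : V →* V).ker := orderOf_dvd_iff_pow_eq_one.1 hx.dvd
  have htop : (powMonoidHom p : V →* V).ker = ⊤ := hV.eq_top_of_characteristic fun hbot =>
    hp.one_lt.ne' (hx.symm.trans (orderOf_eq_one_iff.2 (mem_bot.1 (hbot ▸ hxp))))
  exact ⟨p, hp, ‹_›, fun a => (htop ▸ mem_top a : a ∈ (powMonoidHom p : V →* V).ker)⟩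

end IsMinimalNormal

theorem inf_centralizer_ne_bot_of_isPGroup [Finite G] [Fact p.Prime] [V.Normal] (hV : V ≠ ⊥)
    (hVp : IsPGroup p V) {P : Subgroup G} (hP : IsPGroup p P) :
    V ⊓ centralizer (P : Set G) ≠ ⊥ := by
  let _ : MulDistribMulAction P V := MulDistribMulAction.compHom V
    ((MulAut.conjNormal : G →* MulAut V).comp P.subtype)
  have hsmul (g : P) (v : V) : ((g • v : V) : G) = g * v * (g : G)⁻¹ := rfl
  have : Nontrivial V := (nontrivial_iff_ne_bot V).2 hV
  obtain ⟨n, hn, hcard⟩ := hVp.nontrivial_iff_card.1 this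
  obtain ⟨v, hv, hv_one⟩ := hP.exists_fixed_point_of_prime_dvd_card_of_fixed_point V (a := 1)
    (hcard ▸ dvd_pow_self p hn.ne') fun g => smul_one g
  refine (V ⊓ centralizer (P : Set G)).ne_bot_iff_exists_ne_one.2 ⟨⟨v, v.2, ?_⟩, ?_⟩
  · exact mem_centralizer_iff.2 fun g hg =>
      mul_inv_eq_iff_eq_mul.1 ((hsmul ⟨g, hg⟩ v).symm.trans (congrArg Subtype.val (hv ⟨g, hg⟩)))
  · exact fun h => hv_one (Subtype.ext (congrArg Subtype.val h).symm)

theorem IsMinimalNormal.le_centralizer_of_isPGroup [Finite G] [Fact p.Prime]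
    (hV : IsMinimalNormal V) (hVp : IsPGroup p V) {P : Subgroup G} (hP : IsPGroup p P)
    [(P ⊔ centralizer (V : Set G)).Normal] : P ≤ centralizer (V : Set G) := by
  have := hV.1
  have hle : V ⊓ centralizer (P : Set G) ≤
      V ⊓ centralizer ((P ⊔ centralizer (V : Set G) : Subgroup G) : Set G) := by
    refine le_inf inf_le_left (le_centralizer_iff.1 (sup_le ?_ ?_))
    · exact le_centralizer_iff.1 inf_le_right
    · exact centralizer_le inf_le_left
  have hne := inf_centralizer_ne_bot_of_isPGroup hV.2.1 hVp hP
  exact le_sup_left.trans (le_centralizer_iff.1 (hV.le_of_inf_ne_bot (ne_bot_of_le_ne_bot hne hle)))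

end MinimalNormal

section Eigenvector

open Polynomial in
theorem exists_hasEigenvalue_of_pow_card_eq_self {K W : Type*} [Field K] [Finite K]
    [AddCommGroup W] [Module K W] [FiniteDimensional K W] [Nontrivial W] {f : Module.End K W}
    (hf : f ^ Nat.card K = f) : ∃ a, f.HasEigenvalue a := by
  have hdvd : minpoly K f ∣ X ^ Nat.card K - X := minpoly.dvd K f <| by
    rw [map_sub, map_pow, aeval_X, hf, sub_self]
  have hne : (X ^ Nat.card K - X : K[X]) ≠ 0 :=
    FiniteField.X_pow_card_sub_X_ne_zero K Finite.one_lt_card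
  obtain ⟨a, ha⟩ := ((splits_X_pow_nat_card_sub_X (K := K)).of_dvd hne hdvd).exists_eval_eq_zero
    (minpoly.degree_pos (Algebra.IsIntegral.isIntegral f)).ne'
  exact ⟨a, Module.End.hasEigenvalue_of_isRoot ha⟩

theorem exists_apply_eq_nsmul {p : ℕ} [Fact p.Prime] {W : Type*} [AddCommGroup W] [Finite W]
    [Nontrivial W] [Module (ZMod p) W] {f : W →+ W} (hf : f^[p] = f) :
    ∃ (k : ℕ) (w : W), w ≠ 0 ∧ f w = k • w := by
  have hf' : (f.toZModLinearMap p) ^ Nat.card (ZMod p) = f.toZModLinearMap p := by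
    ext w
    rw [Nat.card_zmod, Module.End.pow_apply]
    exact congrFun hf w
  obtain ⟨k, hk⟩ := exists_hasEigenvalue_of_pow_card_eq_self hf'
  obtain ⟨w, hw⟩ := hk.exists_hasEigenvector
  refine ⟨k.val, w, hw.2, ?_⟩
  rw [← Nat.cast_smul_eq_nsmul (ZMod p), ZMod.natCast_zmod_val]
  exact hw.apply_eq_smul

end Eigenvector

section Cyclic

variable {G : Type*} [Group G] [Finite G] {p : ℕ} [Fact p.Prime] {V : Subgroup G}

open scoped IsMulCommutative in
theorem IsMinimalNormal.exists_conj_eq_pow (hV : IsMinimalNormal V) (hA : IsElementaryAbelian p V)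
    (hD : abelianExpResidual (p - 1) G ≤ centralizer (V : Set G)) (g : G) :
    ∃ k : ℕ, ∀ v ∈ V, g * v * g⁻¹ = v ^ k := by
  have := hV.1
  have := hA.isMulCommutative
  have : Nontrivial V := (nontrivial_iff_ne_bot V).2 hV.2.1
  let φ : G →* MulAut V := MulAut.conjNormal
  rw [← ker_conjNormal V] at hD
  have hφ : (φ g : V →* V)^[p] = (φ g : V →* V) := by
    have h : (φ g) ^ (p - 1) = 1 := (map_pow φ g _).symm.trans (hD (pow_mem_abelianExpResidual _ g))
    have h' : (φ g) ^ p = φ g := by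
      rw [← Nat.sub_add_cancel (Fact.out : p.Prime).one_le, pow_succ, h, one_mul]
    exact (hom_coe_pow (fun σ : MulAut V => ⇑σ) rfl (fun _ _ => rfl) (φ g) p).symm.trans
      (congrArg _ h')
  let _ : Module (ZMod p) (Additive V) := AddCommGroup.zmodModule hA.pow_eq_one
  obtain ⟨k, v, hv, hgv⟩ : ∃ (k : ℕ) (v : V), v ≠ 1 ∧ φ g v = v ^ k :=
    exists_apply_eq_nsmul (f := (φ g : V →* V).toAdditive) hφ
  let U : Subgroup V := (φ g : V →* V).eqLocus (powMonoidHom k)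
  have hU : (U.map V.subtype).Normal := by
    refine ⟨?_⟩
    rintro _ ⟨u, hu : φ g u = u ^ k, rfl⟩ x
    have hcomm : φ g * φ x = φ x * φ g := by
      rw [← commutatorElement_eq_one_iff_mul_comm, ← map_commutatorElement]
      exact hD (mem_sup_left (commutator_mem_commutator (mem_top g) (mem_top x)))
    refine ⟨φ x u, ?_, rfl⟩
    calc φ g (φ x u) = φ x (φ g u) := DFunLike.congr_fun hcomm u
      _ = φ x u ^ k := by rw [hu, map_pow]
  have hUV : U.map V.subtype = V := hV.2.2 _ hU (map_subtype_le U) <|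
    (map_eq_bot_iff_of_injective U V.subtype_injective).not.2 fun hbot =>
      hv (mem_bot.1 (hbot ▸ (hgv : v ∈ U)))
  refine ⟨k, fun w hw => ?_⟩
  obtain ⟨u, hu, rfl⟩ := hUV.ge hw
  exact congrArg Subtype.val (show φ g u = u ^ k from hu)

theorem IsMinimalNormal.exists_eq_zpowers (hV : IsMinimalNormal V) (hA : IsElementaryAbelian p V)
    (hD : abelianExpResidual (p - 1) G ≤ centralizer (V : Set G)) : ∃ y, V = zpowers y := by
  obtain ⟨v, hv, hv_one⟩ := V.bot_or_exists_ne_one.resolve_left hV.2.1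
  refine ⟨v, (hV.2.2 _ ⟨?_⟩ (zpowers_le.2 hv) (zpowers_eq_bot.not.2 hv_one)).symm⟩
  intro x hx g
  obtain ⟨k, hk⟩ := hV.exists_conj_eq_pow hA hD g
  rw [hk x (zpowers_le.2 hv hx)]
  exact pow_mem hx k

end Cyclic

section Frattini

variable {G : Type*} [Group G] [Finite G]

theorem isSolvable_of_le_frattini {N : Subgroup G} [N.Normal] (hN : N ≤ frattini G)
    [Group.IsSolvable (G ⧸ N)] : Group.IsSolvable G := by
  have : Group.IsNilpotent (frattini G) := frattini_nilpotent
  exact Group.isSolvable_of_ker_le_range (frattini G).subtype (QuotientGroup.mk' N)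
    (by rwa [QuotientGroup.ker_mk', range_subtype])

theorem exists_sylow_le_sup_map_subtype {q : ℕ} [Fact q.Prime] {K T : Subgroup G} [K.Normal]
    (hT : IsPGroup q (T.map (QuotientGroup.mk' K))) (P : Sylow q T) :
    T ≤ K ⊔ (P : Subgroup T).map T.subtype := by
  let f : T →* T.map (QuotientGroup.mk' K) := (QuotientGroup.mk' K).subgroupMap T
  have hf : Function.Surjective f := (QuotientGroup.mk' K).subgroupMap_surjective T
  have htop : (P : Subgroup T).map f = ⊤ :=
    ((P.mapSurjective hf).is_maximal' (hT.to_subgroup ⊤) le_top).symm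
  intro t ht
  obtain ⟨s, hs, hst⟩ := htop.ge (mem_top (f ⟨t, ht⟩))
  have hmk : QuotientGroup.mk' K s = QuotientGroup.mk' K t := congrArg Subtype.val hst
  refine mem_sup_of_normal_left.2 ⟨_, QuotientGroup.eq_iff_div_mem.1 hmk.symm, s, ⟨s, hs, rfl⟩, ?_⟩
  exact div_mul_cancel t s

theorem exists_normal_isPGroup_le_sup {q : ℕ} [Fact q.Prime] {K T : Subgroup G} [K.Normal]
    [T.Normal] (hK : K ≤ frattini G) (hT : IsPGroup q (T.map (QuotientGroup.mk' K))) :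
    ∃ Q : Subgroup G, Q.Normal ∧ IsPGroup q Q ∧ T ≤ K ⊔ Q := by
  let P : Sylow q T := default
  have hTP := exists_sylow_le_sup_map_subtype hT P
  refine ⟨_, normalizer_eq_top_iff.1 (frattini_nongenerating ?_), P.2.map T.subtype, hTP⟩
  rw [eq_top_iff, ← P.normalizer_sup_eq_top]
  exact sup_le le_sup_left (hTP.trans (sup_le (hK.trans le_sup_right)
    (le_normalizer.trans le_sup_left)))

theorem exists_normal_ne_bot_inf_eq_bot {p : ℕ} (hp : p.Prime) {V : Subgroup G} [V.Normal]
    (hVΦ : V ≤ frattini G) (hVp : IsPGroup p V) {y : G ⧸ V} [(zpowers y).Normal]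
    (hy : (orderOf y).Prime) (hyp : orderOf y ≠ p) :
    ∃ Q : Subgroup G, Q.Normal ∧ Q ≠ ⊥ ∧ V ⊓ Q = ⊥ := by
  have : Fact p.Prime := ⟨hp⟩
  have : Fact (orderOf y).Prime := ⟨hy⟩
  have hmap : ((zpowers y).comap (QuotientGroup.mk' V)).map (QuotientGroup.mk' V) = zpowers y :=
    map_comap_eq_self_of_surjective (QuotientGroup.mk'_surjective V) _
  have hyG : IsPGroup (orderOf y) (zpowers y) :=
    .of_card (n := 1) (by rw [Nat.card_zpowers, pow_one])
  obtain ⟨Q, hQ, hQp, hle⟩ := exists_normal_isPGroup_le_sup hVΦ (hmap.symm ▸ hyG)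
  refine ⟨Q, hQ, ?_, (IsPGroup.disjoint_of_ne _ _ hyp.symm V Q hVp hQp).eq_bot⟩
  rintro rfl
  have hy_one : zpowers y = ⊥ := by
    rw [← hmap, Subgroup.map_eq_bot_iff, QuotientGroup.ker_mk']
    exact hle.trans (sup_bot_eq V).le
  exact hy.one_lt.ne' (orderOf_eq_one_iff.2 (zpowers_eq_bot.1 hy_one))

end Frattini

section Saturation

variable {G : Type*} [Group G] [Finite G] {V : Subgroup G}

theorem IsMinimalNormal.isSupersoluble_of_isPGroup {p : ℕ} [Fact p.Prime] [V.Normal]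
    (hV : IsMinimalNormal V) (hA : IsElementaryAbelian p V) (hVs : IsSupersolubleMod V)
    (hD : IsPGroup p (abelianExpResidual (p - 1) (G ⧸ V))) : IsSupersoluble G := by
  have hDp : IsPGroup p (abelianExpResidual (p - 1) G) :=
    (hD.comap_of_ker_isPGroup (QuotientGroup.mk' V)
      ((QuotientGroup.ker_mk' V).symm ▸ hA.isPGroup)).to_le
        (map_le_iff_le_comap.1 (map_abelianExpResidual_le _))
  obtain ⟨y, rfl⟩ := hV.exists_eq_zpowers hA (hV.le_centralizer_of_isPGroup hA.isPGroup hDp)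
  rw [← isSupersolubleMod_bot_iff]
  exact .of_sup_zpowers (y := y) (by rwa [bot_sup_eq]) (by rwa [bot_sup_eq])

-- With `N` a normal `p'`-complement in `abelianExpResidual (p - 1) (G ⧸ V)`: if `N` is trivial,
-- this residual is a `p`-group and acts trivially on `V`, so `V` is cyclic; otherwise the Frattini
-- argument produces a normal subgroup `Q` disjoint from `V`, and `G` embeds in `G ⧸ V × G ⧸ Q`.
theorem IsMinimalNormal.isSupersoluble_of_le_frattini (hV : IsMinimalNormal V)
    (hVΦ : V ≤ frattini G) (h : ∀ Q : Subgroup G, Q.Normal → Q ≠ ⊥ → IsSupersolubleMod Q) :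
    IsSupersoluble G := by
  have := hV.1
  have hVs := h V hV.1 hV.2.1
  have hquot : IsSupersoluble (G ⧸ V) := isSupersoluble_quotient_iff.2 hVs
  have := hquot.isSolvable
  have := isSolvable_of_le_frattini hVΦ
  obtain ⟨p, hp, hA⟩ := hV.exists_isElementaryAbelian
  have : Fact p.Prime := ⟨hp⟩
  obtain ⟨N, _, hNp, hN⟩ := hquot.isPNilpotentIn_abelianExpResidual (p := p)
  by_cases hbot : N = ⊥
  · subst hbot
    exact hV.isSupersoluble_of_isPGroup hA hVs fun d =>
      (hN d d.2).imp fun k hk => Subtype.ext (mem_bot.1 hk)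
  · obtain ⟨y, hyN, hy, _⟩ := hquot.exists_prime_normal_zpowers hbot
    have hyp : orderOf y ≠ p := fun hyp => hy.one_lt.ne' <|
      orderOf_eq_one_iff.2 (hNp y hyN (hyp ▸ pow_orderOf_eq_one y))
    obtain ⟨Q, _, hQ, hVQ⟩ := exists_normal_ne_bot_inf_eq_bot hp hVΦ hA.isPGroup hy hyp
    rw [← isSupersolubleMod_bot_iff, ← hVQ]
    exact hVs.inf (h Q ‹_› hQ)

theorem isSupersoluble_of_le_frattini {N : Subgroup G} [N.Normal] (hN : N ≤ frattini G)
    (hNs : IsSupersolubleMod N) : IsSupersoluble G := by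
  induction h : Nat.card G using Nat.strong_induction_on generalizing G with
  | _ n ih =>
  subst h
  by_cases hbot : N = ⊥
  · exact isSupersolubleMod_bot_iff.1 (hbot ▸ hNs)
  obtain ⟨V, hVN, hV⟩ := exists_isMinimalNormal_le hbot
  refine hV.isSupersoluble_of_le_frattini (hVN.trans hN) fun Q _ hQ => ?_
  have hsurj := QuotientGroup.mk'_surjective Q
  have := Normal.map ‹N.Normal› _ hsurj
  exact isSupersoluble_quotient_iff.1 (ih _ (card_quotient_lt_card hQ)
    (map_le_iff_le_comap.2 (hN.trans (frattini_le_comap_frattini_of_surjective hsurj)))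
    (hNs.map hsurj) rfl)

end Saturation

section MaximalSubgroups

variable {G H : Type*} [Group G] [Group H]

theorem map_subtype_covBy_iff {M : Subgroup G} {T L : Subgroup M} :
    T.map M.subtype ⋖ L.map M.subtype ↔ T ⋖ L := by
  refine Set.OrdConnected.apply_covBy_apply_iff
    (OrderEmbedding.ofMapLEIff (map M.subtype) fun _ _ =>
      map_le_map_iff_of_injective M.subtype_injective) ⟨?_⟩
  rintro _ - _ ⟨L, rfl⟩ Z ⟨-, hZL⟩
  exact ⟨Z.subgroupOf M, map_subgroupOf_eq_of_le (hZL.trans (map_subtype_le L))⟩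

theorem isCoatom_iff_map_subtype_covBy {M : Subgroup G} {L : Subgroup M} :
    IsCoatom L ↔ L.map M.subtype ⋖ M := by
  rw [← covBy_top_iff, ← map_subtype_covBy_iff, ← MonoidHom.range_eq_map, range_subtype]

theorem isMaximalIn_iff_covBy {T L : Subgroup G} : IsMaximalIn T L ↔ T ⋖ L := by
  have hcov : T ≤ L → (IsCoatom (T.subgroupOf L) ↔ T ⋖ L) := fun hTL => by
    rw [isCoatom_iff_map_subtype_covBy, map_subgroupOf_eq_of_le hTL]
  exact ⟨fun h => (hcov h.1).1 h.2, fun h => ⟨h.le, (hcov h.le).2 h⟩⟩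

theorem comap_covBy_comap {f : G →* H} (hf : Function.Surjective f) {T L : Subgroup H}
    (h : T ⋖ L) : T.comap f ⋖ L.comap f := by
  refine CovBy.image
    (OrderEmbedding.ofMapLEIff (comap f) fun _ _ => comap_le_comap_of_surjective hf) h ⟨?_⟩
  rintro _ ⟨T, rfl⟩ _ - Z ⟨hTZ, -⟩
  exact ⟨Z.map f, comap_map_eq_self ((ker_le_comap f T).trans hTZ)⟩

theorem isSimpleGroup_quotient_of_isCoatom {S : Subgroup G} [S.Normal] (hS : IsCoatom S) :
    IsSimpleGroup (G ⧸ S) := by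
  have : Nontrivial (G ⧸ S) := QuotientGroup.nontrivial_iff.2 hS.1
  have hinj := comap_injective (QuotientGroup.mk'_surjective S)
  refine ⟨fun J _ => ?_⟩
  have hJ : S ≤ J.comap (QuotientGroup.mk' S) := by
    simpa only [QuotientGroup.ker_mk'] using ker_le_comap (QuotientGroup.mk' S) J
  refine (hS.le_iff.1 hJ).symm.imp (fun h => hinj ?_) fun h => hinj ?_
  · rw [h, MonoidHom.comap_bot, QuotientGroup.ker_mk']
  · rw [h, comap_top]

theorem index_prime_of_isCoatom [Group.IsSolvable G] {S : Subgroup G} [S.Normal]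
    (hS : IsCoatom S) : S.index.Prime := by
  have := isSimpleGroup_quotient_of_isCoatom hS
  let := CommGroup.mk (G := G ⧸ S) (IsSimpleGroup.comm_iff_isSolvable.2 inferInstance)
  rw [index_eq_card]
  exact IsSimpleGroup.prime_card

theorem exists_isCoatom_normal_ge [Finite G] [Group.IsSolvable G] {N : Subgroup G} [N.Normal]
    (hN : N ≠ ⊤) : ∃ S : Subgroup G, IsCoatom S ∧ S.Normal ∧ N ≤ S := by
  have : Nontrivial (G ⧸ N) := QuotientGroup.nontrivial_iff.2 hN
  obtain ⟨S, hS, hle⟩ := (eq_top_or_exists_le_coatom (commutator (G ⧸ N))).resolve_left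
    (Group.IsSolvable.commutator_lt_top_of_nontrivial (G ⧸ N)).ne
  have hSn : S.Normal := Normal.of_commutator_le (G ⧸ N) hle
  refine ⟨S.comap (QuotientGroup.mk' N),
    isCoatom_comap_of_surjective (QuotientGroup.mk'_surjective N) hS, inferInstance, ?_⟩
  simpa only [QuotientGroup.ker_mk'] using ker_le_comap (QuotientGroup.mk' N) S

end MaximalSubgroups

/-- A single step `X ≤ G` of a chain witnessing `K`-`𝔘`-subnormality: `X` is normal in `G`, or `G`
modulo the core of `X` is supersoluble. -/
def IsKUStep {G : Type*} [Group G] (X : Subgroup G) : Prop :=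
  X.Normal ∨ IsSupersolubleMod X.normalCore

namespace IsKUStep

variable {G H : Type*} [Group G] [Group H] {X : Subgroup G}

theorem map (hX : IsKUStep X) {f : G →* H} (hf : Function.Surjective f) :
    IsKUStep (X.map f) := by
  refine hX.imp (fun h => h.map f hf) fun h => (h.map hf).mono ?_
  have := Normal.map X.normalCore_normal f hf
  exact normal_le_normalCore.2 (map_mono X.normalCore_le)

variable [Finite G]

theorem comap (hX : IsKUStep X) (f : H →* G) : IsKUStep (X.comap f) :=
  hX.imp (fun h => h.comap f) fun h =>
    (h.comap f).mono (normal_le_normalCore.2 (comap_mono X.normalCore_le))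

theorem ssResidual_le_of_isCoatom (hX : IsKUStep X) (hXG : IsCoatom X) : ssResidual G ≤ X := by
  obtain hn | hs := hX
  · exact ssResidual_le (.of_isCoatom hXG)
  · exact (ssResidual_le hs).trans X.normalCore_le

end IsKUStep

theorem isSupersoluble_of_forall_isCoatom_isKUStep {G : Type*} [Group G] [Finite G]
    (h : ∀ X : Subgroup G, IsCoatom X → IsKUStep X) : IsSupersoluble G :=
  isSupersoluble_of_le_frattini
    (le_iInf₂ fun X hX => (h X hX).ssResidual_le_of_isCoatom hX) isSupersolubleMod_ssResidual

/-- The condition inherited by a maximal subgroup `G` of a group all of whose 3-maximal subgroups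
are `K`-`𝔘`-subnormal: proper subgroups of `G` are supersoluble, and every 2-maximal subgroup of
`G` lies in a proper subgroup which is one `K`-`𝔘`-subnormality step below `G`. Unlike
`K`-`𝔘`-subnormality of the 2-maximal subgroups, it visibly passes to quotients. -/
structure IsKUCritical (G : Type*) [Group G] : Prop where
  isSupersoluble_of_ne_top : ∀ L : Subgroup G, L ≠ ⊤ → IsSupersoluble L
  exists_isKUStep : ∀ L T : Subgroup G, IsCoatom L → T ⋖ L →
    ∃ X : Subgroup G, X ≠ ⊤ ∧ T ≤ X ∧ IsKUStep X

section Solvable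

variable {G : Type*} [Group G] [Finite G]

-- A Sylow subgroup `P < G` lies in a maximal subgroup, which by hypothesis is generated by any of
-- its nontrivial elements; so all Sylow subgroups are cyclic unless `G` is a `p`-group.
theorem isSolvable_of_forall_lt_isCoatom_eq_bot
    (h : ∀ L Z : Subgroup G, IsCoatom L → Z < L → Z = ⊥) : Group.IsSolvable G := by
  by_cases hG : ∃ p, p.Prime ∧ IsPGroup p G
  · obtain ⟨p, hp, hG⟩ := hG
    have : Fact p.Prime := ⟨hp⟩
    have := hG.isNilpotent
    infer_instance
  have : IsZGroup G := by
    refine ⟨fun p hp P => ?_⟩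
    have hP : (P : Subgroup G) ≠ ⊤ := fun hP =>
      hG ⟨p, hp, (hP ▸ P.2 : IsPGroup p (⊤ : Subgroup G)).of_equiv topEquiv⟩
    obtain ⟨L, hL, hPL⟩ := (eq_top_or_exists_le_coatom (P : Subgroup G)).resolve_left hP
    change IsCyclic (P : Subgroup G)
    obtain hbot | ⟨x, hx, hx_one⟩ := (P : Subgroup G).bot_or_exists_ne_one
    · rw [hbot]
      infer_instance
    have hxP : zpowers x ≤ P := zpowers_le.2 hx
    have hxL : zpowers x = L := (hxP.trans hPL).eq_of_not_lt fun hlt =>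
      hx_one (zpowers_eq_bot.1 (h L _ hL hlt))
    rw [le_antisymm (hxL ▸ hPL) hxP]
    infer_instance
  infer_instance

end Solvable

namespace IsKUCritical

variable {G : Type*} [Group G] [Finite G] (hG : IsKUCritical G)
include hG

theorem of_surjective {H : Type*} [Group H] {f : G →* H} (hf : Function.Surjective f) :
    IsKUCritical H where
  isSupersoluble_of_ne_top L hL :=
    (hG.isSupersoluble_of_ne_top (L.comap f) fun h =>
      hL (comap_injective hf (h.trans (comap_top f).symm))).of_surjective
        (f.subgroupComap_surjective_of_surjective L hf)
  exists_isKUStep L T hL hT := by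
    obtain ⟨X, hX, hTX, hstep⟩ := hG.exists_isKUStep _ _ (isCoatom_comap_of_surjective hf hL)
      (comap_covBy_comap hf hT)
    have hcomap : (X.map f).comap f = X := comap_map_eq_self ((ker_le_comap f T).trans hTX)
    refine ⟨X.map f, fun h => hX ?_, ?_, hstep.map hf⟩
    · rw [← hcomap, h, comap_top]
    · rwa [← comap_le_comap_of_surjective hf, hcomap]

theorem eq_bot_of_lt_isCoatom [IsSimpleGroup G] (hGs : ¬ IsSupersoluble G) {L Z : Subgroup G}
    (hL : IsCoatom L) (hZ : Z < L) : Z = ⊥ := by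
  obtain ⟨T, hZT, hT⟩ := exists_le_covBy_of_lt hZ
  obtain ⟨X, hX, hTX, hn | hs⟩ := hG.exists_isKUStep L T hL hT
  · exact le_bot_iff.1 (hn.eq_bot_or_eq_top.resolve_right hX ▸ hZT.trans hTX)
  · obtain hbot | htop := X.normalCore_normal.eq_bot_or_eq_top
    · exact absurd (isSupersolubleMod_bot_iff.1 (hbot ▸ hs)) hGs
    · exact absurd (top_le_iff.1 (htop ▸ X.normalCore_le)) hX

theorem isSolvable : Group.IsSolvable G := by
  induction h : Nat.card G using Nat.strong_induction_on generalizing G with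
  | _ n ih =>
  subst h
  by_cases hGs : IsSupersoluble G
  · exact hGs.isSolvable
  by_cases hN : ∃ N : Subgroup G, N.Normal ∧ N ≠ ⊥ ∧ N ≠ ⊤
  · obtain ⟨N, _, hbot, htop⟩ := hN
    have := (hG.isSupersoluble_of_ne_top N htop).isSolvable
    have := ih _ (card_quotient_lt_card hbot)
      (hG.of_surjective (QuotientGroup.mk'_surjective N)) rfl
    exact Group.isSolvable_of_ker_le_range N.subtype (QuotientGroup.mk' N)
      (by rw [QuotientGroup.ker_mk', range_subtype])
  · push Not at hN
    cases subsingleton_or_nontrivial G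
    · infer_instance
    have : IsSimpleGroup G := ⟨fun N hn => or_iff_not_imp_left.2 (hN N hn)⟩
    exact isSolvable_of_forall_lt_isCoatom_eq_bot fun L Z => hG.eq_bot_of_lt_isCoatom hGs

theorem sup_ssResidual_ne_top {L T : Subgroup G} (hL : IsCoatom L) (hT : T ⋖ L) :
    T ⊔ ssResidual G ≠ ⊤ := by
  have := hG.isSolvable
  obtain ⟨X, hX, hTX, hn | hs⟩ := hG.exists_isKUStep L T hL hT
  · obtain ⟨S, hS, _, hXS⟩ := exists_isCoatom_normal_ge hX
    exact ne_top_of_le_ne_top hS.1 (sup_le (hTX.trans hXS) (ssResidual_le (.of_isCoatom hS)))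
  · exact ne_top_of_le_ne_top hX (sup_le hTX ((ssResidual_le hs).trans X.normalCore_le))

end IsKUCritical

section SylowFrattini

theorem sylow_eq_bot_of_le_frattini {G : Type*} [Group G] [Finite G] {p : ℕ} [Fact p.Prime]
    (P : Sylow p G) (hP : (P : Subgroup G) ≤ frattini G) : (P : Subgroup G) = ⊥ := by
  have : (P : Subgroup G).Normal :=
    normalizer_eq_top_iff.1 (frattini_nongenerating (P.normalizer_sup_eq_top' hP))
  obtain ⟨H, hH⟩ := exists_right_complement'_of_coprime P.card_coprime_index
  obtain rfl : H = ⊤ := frattini_nongenerating <| top_le_iff.1 <|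
    hH.sup_eq_top.ge.trans (sup_le (hP.trans le_sup_right) le_sup_left)
  exact disjoint_top.1 hH.disjoint

theorem ker_eq_bot_of_le_frattini {G H : Type*} [Group G] [Finite G] [Group H] {p : ℕ}
    [Fact p.Prime] {f : G →* H} (hf : Function.Surjective f) (hp : IsPGroup p f.ker)
    (hΦ : f.ker ≤ frattini G) (hH : ∀ P : Sylow p H, (P : Subgroup H) = ⊥) : f.ker = ⊥ := by
  have := Finite.of_surjective f hf
  obtain ⟨P, hP⟩ := hp.exists_le_sylow
  have hPker : (P : Subgroup G) ≤ f.ker := by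
    rw [← (P : Subgroup G).map_eq_bot_iff, ← Sylow.coe_mapSurjective hf]
    exact hH _
  exact le_bot_iff.1 (sylow_eq_bot_of_le_frattini P (hPker.trans hΦ) ▸ hP)

end SylowFrattini

section Centralizer

variable {G : Type*} [Group G] [Finite G] {p : ℕ} {V : Subgroup G}

theorem IsMinimalNormal.map_abelianExpResidual_le_centralizer (hV : IsMinimalNormal V)
    (hp : p.Prime) (hA : IsElementaryAbelian p V) {S : Subgroup G} [S.Normal] (hVS : V ≤ S)
    (hS : IsSupersoluble S) :
    (abelianExpResidual (p - 1) S).map S.subtype ≤ centralizer (V : Set G) := by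
  have := hV.1
  obtain ⟨y, hyV, hy, _⟩ := hS.exists_prime_normal_zpowers (N := V.subgroupOf S)
    fun h => hV.2.1 (by rw [← map_subgroupOf_eq_of_le hVS, h, Subgroup.map_bot])
  have hy_pow : (y : G) ^ p = 1 := congrArg Subtype.val (hA.pow_eq_one ⟨y, hyV⟩)
  have hyp : orderOf y = p := (Nat.prime_dvd_prime_iff_eq hy hp).1 <|
    orderOf_dvd_of_pow_eq_one <| Subtype.ext hy_pow
  refine le_centralizer_iff.1 (hV.le_of_inf_ne_bot fun hbot => hy.one_lt.ne' ?_)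
  rw [orderOf_eq_one_iff, ← OneMemClass.coe_eq_one, ← mem_bot, ← hbot]
  refine ⟨hyV, ?_⟩
  rintro _ ⟨d, hd, rfl⟩
  exact congrArg Subtype.val
    (abelianExpResidual_le_centralizer_zpowers hp hyp hd y (mem_zpowers y)).symm

theorem sylow_sup_normal_of_pow_mem [Fact p.Prime] {C : Subgroup G} [C.Normal]
    (hC : IsSupersolubleMod C) (hpow : ∀ g : G, g ^ (p * (p - 1)) ∈ C) (P : Sylow p G) :
    ((P : Subgroup G) ⊔ C).Normal := by
  have hp : p.Prime := Fact.out
  have hsurj := QuotientGroup.mk'_surjective C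
  have hPC := (isSupersoluble_quotient_iff.2 hC).normal_sylow (fun q hq hqC => ?_)
    (P.mapSurjective hsurj)
  · rw [← QuotientGroup.ker_mk' C, ← comap_map_eq, ← Sylow.coe_mapSurjective hsurj]
    exact hPC.comap _
  · have : Fact q.Prime := ⟨hq⟩
    obtain ⟨x, rfl⟩ := exists_prime_orderOf_dvd_card' q hqC
    obtain ⟨g, rfl⟩ := QuotientGroup.mk_surjective x
    have hdvd : orderOf (g : G ⧸ C) ∣ p * (p - 1) :=
      orderOf_dvd_of_pow_eq_one ((QuotientGroup.eq_one_iff _).2 (hpow g))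
    obtain h | h := hq.dvd_mul.1 hdvd
    · exact Nat.le_of_dvd hp.pos h
    · exact (Nat.le_of_dvd (Nat.sub_pos_of_lt hp.one_lt) h).trans (Nat.sub_le p 1)

theorem IsMinimalNormal.le_centralizer_of_forall_isSupersoluble [Fact p.Prime]
    [Group.IsSolvable G] (hV : IsMinimalNormal V) (hA : IsElementaryAbelian p V) (hVtop : V ≠ ⊤)
    (hVs : IsSupersolubleMod V) (h : ∀ L : Subgroup G, L ≠ ⊤ → IsSupersoluble L)
    {P : Subgroup G} (hP : IsPGroup p P) : P ≤ centralizer (V : Set G) := by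
  have hp : p.Prime := Fact.out
  have := hV.1
  obtain ⟨S, hS, _, hVS⟩ := exists_isCoatom_normal_ge hVtop
  have hpow : ∀ g ∈ S, g ^ (p - 1) ∈ centralizer (V : Set G) := fun g hg =>
    hV.map_abelianExpResidual_le_centralizer hp hA hVS (h S hS.1)
      ⟨_, pow_mem_abelianExpResidual (p - 1) ⟨g, hg⟩, rfl⟩
  by_cases hSp : S.index = p
  · have := hA.isMulCommutative
    obtain ⟨Q, hPQ⟩ := hP.exists_le_sylow
    have : ((Q : Subgroup G) ⊔ centralizer (V : Set G)).Normal :=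
      sylow_sup_normal_of_pow_mem (hVs.mono (le_centralizer V))
        (fun g => pow_mul g p _ ▸ hpow _ (hSp ▸ S.pow_index_mem g)) Q
    exact hPQ.trans (hV.le_centralizer_of_isPGroup hA.isPGroup Q.2)
  · have hPS : P ≤ S := le_of_isPGroup_of_pow_mem hP
      ((Nat.coprime_primes hp (index_prime_of_isCoatom hS)).2 (Ne.symm hSp))
      fun x _ => S.pow_index_mem x
    exact le_of_isPGroup_of_pow_mem hP
      (Nat.coprime_of_lt_prime (Nat.sub_pos_of_lt hp.one_lt).ne' (Nat.sub_lt hp.pos one_pos) hp)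
      fun x hx => hpow x (hPS hx)

end Centralizer

section Residual

variable {G : Type*} [Group G] [Finite G]

theorem isSupersoluble_iff_ssResidual_eq_bot : IsSupersoluble G ↔ ssResidual G = ⊥ := by
  rw [← isSupersolubleMod_bot_iff]
  exact ⟨fun h => le_bot_iff.1 (ssResidual_le h), fun h => h ▸ isSupersolubleMod_ssResidual⟩

theorem ssResidual_ne_top [Nontrivial G] [Group.IsSolvable G] : ssResidual G ≠ ⊤ := by
  obtain ⟨S, hS, _, -⟩ := exists_isCoatom_normal_ge (bot_ne_top (α := Subgroup G))
  exact ne_top_of_le_ne_top hS.1 (ssResidual_le (.of_isCoatom hS))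

theorem exists_isCoatom_not_ssResidual_le (hG : ¬ IsSupersoluble G) :
    ∃ L : Subgroup G, IsCoatom L ∧ ¬ ssResidual G ≤ L := by
  by_contra! h
  exact hG (isSupersoluble_of_le_frattini (le_iInf₂ h) isSupersolubleMod_ssResidual)

theorem ssResidual_le_of_le_sup {K Q : Subgroup G} [K.Normal] [Q.Normal] (hK : K ≤ frattini G)
    (h : ssResidual G ≤ K ⊔ Q) : ssResidual G ≤ Q := by
  have hsurj := QuotientGroup.mk'_surjective Q
  have := Normal.map ‹K.Normal› _ hsurj
  refine ssResidual_le (isSupersoluble_quotient_iff.1 <| isSupersoluble_of_le_frattini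
    (map_le_iff_le_comap.2 (hK.trans (frattini_le_comap_frattini_of_surjective hsurj)))
    (isSupersolubleMod_ssResidual.mono ?_))
  have hQ : Q.map (QuotientGroup.mk' Q) = ⊥ :=
    (Subgroup.map_eq_bot_iff _).2 (QuotientGroup.ker_mk' Q).ge
  simpa only [← map_ssResidual hsurj, Subgroup.map_sup, hQ, sup_bot_eq] using
    map_mono (f := QuotientGroup.mk' Q) h

theorem eq_of_isPGroup_of_le_ssResidual {p q : ℕ} [Fact p.Prime] [Fact q.Prime] {K : Subgroup G}
    [K.Normal] (hKbot : K ≠ ⊥) (hKΦ : K ≤ frattini G) (hKR : K ≤ ssResidual G)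
    (hKp : IsPGroup p K) (hRq : IsPGroup q (ssResidual (G ⧸ K))) : p = q := by
  rw [← map_ssResidual (QuotientGroup.mk'_surjective K)] at hRq
  obtain ⟨Q, _, hQ, hRQ⟩ := exists_normal_isPGroup_le_sup hKΦ hRq
  have hKQ : K ≤ Q := hKR.trans (ssResidual_le_of_le_sup hKΦ hRQ)
  by_contra hpq
  exact hKbot ((IsPGroup.disjoint_of_ne p q hpq K Q hKp hQ).eq_bot_of_le hKQ)

theorem IsMinimalNormal.not_normal_zpowers (hR : IsMinimalNormal (ssResidual G)) {y : G}
    (hy : y ∈ ssResidual G) (hy_one : y ≠ 1) : ¬ (zpowers y).Normal := fun hn => by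
  have hyR : zpowers y = ssResidual G :=
    hR.2.2 _ hn (zpowers_le.2 hy) (zpowers_ne_bot.2 hy_one)
  refine hR.2.1 (isSupersoluble_iff_ssResidual_eq_bot.1 (isSupersolubleMod_bot_iff.1 ?_))
  refine .of_sup_zpowers (y := y) ?_ ?_ <;> rw [bot_sup_eq]
  exacts [hn, hyR ▸ isSupersolubleMod_ssResidual]

theorem IsMinimalNormal.sup_centralizer_ssResidual_ne_top (hR : IsMinimalNormal (ssResidual G))
    {Y : Subgroup G} (hY : IsSupersoluble Y) (hRY : ssResidual G ⊓ Y ≠ ⊥) :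
    Y ⊔ centralizer (ssResidual G : Set G) ≠ ⊤ := fun htop => by
  obtain ⟨y, hyR, hy, hn⟩ := hY.exists_prime_normal_zpowers (N := (ssResidual G).subgroupOf Y)
    fun h => hRY (by rw [← subgroupOf_map_subtype, h, Subgroup.map_bot])
  have hy_one : (y : G) ≠ 1 := fun h =>
    hy.one_lt.ne' (orderOf_eq_one_iff.2 (OneMemClass.coe_eq_one.1 h))
  have hYn : Y ≤ normalizer (zpowers (y : G) : Set G) := by
    have hle := le_normalizer_map (H := zpowers y) Y.subtype
    rwa [normalizer_eq_top_iff.2 hn, ← MonoidHom.range_eq_map, range_subtype,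
      MonoidHom.map_zpowers] at hle
  have hCn : centralizer (ssResidual G : Set G) ≤ normalizer (zpowers (y : G) : Set G) :=
    (centralizer_le (zpowers_le.2 (mem_subgroupOf.1 hyR))).trans (centralizer_le_normalizer _)
  exact hR.not_normal_zpowers hyR hy_one
    (normalizer_eq_top_iff.1 (top_le_iff.1 (htop ▸ sup_le hYn hCn)))

end Residual

theorem le_map_subtype_sup_of_isCoatom {G : Type*} [Group G] {L Z : Subgroup G} {T : Subgroup L}
    (hT : IsCoatom T) (hZ : ¬ Z.subgroupOf L ≤ T) : L ≤ T.map L.subtype ⊔ Z := by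
  have htop : (T ⊔ Z.subgroupOf L).map L.subtype = L := by
    rw [hT.2 _ (left_lt_sup.2 hZ), ← MonoidHom.range_eq_map, range_subtype]
  rw [Subgroup.map_sup, subgroupOf_map_subtype] at htop
  exact htop.ge.trans (sup_le_sup_left inf_le_left _)

namespace IsKUCritical

variable {G : Type*} [Group G] [Finite G] (hG : IsKUCritical G)
include hG

theorem le_frattini {K : Subgroup G} [K.Normal] (hK : ¬ ssResidual G ≤ K) : K ≤ frattini G := by
  refine le_iInf₂ fun L hL => by_contra fun hKL => hK ?_
  have hsurj : Function.Surjective ((QuotientGroup.mk' K).comp L.subtype) := by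
    rw [← MonoidHom.range_eq_top, MonoidHom.range_comp, range_subtype]
    apply comap_injective (QuotientGroup.mk'_surjective K)
    rw [QuotientGroup.comap_map_mk', comap_top]
    exact hL.2 _ (right_lt_sup.2 hKL)
  exact ssResidual_le (isSupersoluble_quotient_iff.1
    ((hG.isSupersoluble_of_ne_top L hL.1).of_surjective hsurj))

variable {L : Subgroup G} (hL : IsCoatom L) (hRL : ¬ ssResidual G ≤ L)
include hL hRL

theorem subgroupOf_le_frattini_of_le_ssResidual {K : Subgroup G} (hK : K ≤ ssResidual G) :
    K.subgroupOf L ≤ frattini L := by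
  refine le_iInf₂ fun T hT => by_contra fun hKT => ?_
  refine hG.sup_ssResidual_ne_top hL (isCoatom_iff_map_subtype_covBy.1 hT) (hL.2 _ ?_)
  exact (left_lt_sup.2 hRL).trans_le (sup_le ((le_map_subtype_sup_of_isCoatom hT hKT).trans
    (sup_le_sup_left hK _)) le_sup_right)

theorem centralizer_ssResidual_subgroupOf_le_frattini (hR : IsMinimalNormal (ssResidual G)) :
    (centralizer (ssResidual G : Set G)).subgroupOf L ≤ frattini L := by
  refine le_iInf₂ fun T hT => by_contra fun hCT => ?_
  have hY := hG.isSupersoluble_of_ne_top _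
    (hG.sup_ssResidual_ne_top hL (isCoatom_iff_map_subtype_covBy.1 hT))
  refine hR.sup_centralizer_ssResidual_ne_top hY ?_ (hL.2 _ ?_)
  · rw [inf_eq_left.2 le_sup_right]
    exact hR.2.1
  · exact (left_lt_sup.2 hRL).trans_le (sup_le ((le_map_subtype_sup_of_isCoatom hT hCT).trans
      (sup_le_sup_right le_sup_left _)) (le_sup_right.trans le_sup_left))

theorem sylow_eq_bot {p : ℕ} [Fact p.Prime] (hR : IsMinimalNormal (ssResidual G))
    (hA : IsElementaryAbelian p (ssResidual G)) (P : Sylow p L) : (P : Subgroup L) = ⊥ := by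
  have := hG.isSolvable
  have : Nontrivial G := Subgroup.nontrivial_iff.1 ⟨L, ⊤, hL.1⟩
  refine sylow_eq_bot_of_le_frattini P
    (le_trans ?_ (hG.centralizer_ssResidual_subgroupOf_le_frattini hL hRL hR))
  exact map_le_iff_le_comap.1 <| hR.le_centralizer_of_forall_isSupersoluble hA ssResidual_ne_top
    isSupersolubleMod_ssResidual hG.isSupersoluble_of_ne_top (P.2.map L.subtype)

omit hL hRL

theorem not_isMinimalNormal_ssResidual_quotient {K : Subgroup G} [K.Normal]
    (hK : IsMinimalNormal K) (hKR : K ≤ ssResidual G) :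
    ¬ IsMinimalNormal (ssResidual (G ⧸ K)) := fun hR => by
  have hsurj := QuotientGroup.mk'_surjective K
  have hQ : IsKUCritical (G ⧸ K) := hG.of_surjective hsurj
  have := hG.isSolvable
  obtain ⟨p, hp, hKp⟩ := hK.exists_isElementaryAbelian
  obtain ⟨q, hq, hRq⟩ := hR.exists_isElementaryAbelian
  have : Fact p.Prime := ⟨hp⟩
  have : Fact q.Prime := ⟨hq⟩
  have hKΦ : K ≤ frattini G := hG.le_frattini fun h => hR.2.1 <| by
    rwa [← map_ssResidual hsurj, Subgroup.map_eq_bot_iff, QuotientGroup.ker_mk']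
  obtain rfl := eq_of_isPGroup_of_le_ssResidual hK.2.1 hKΦ hKR hKp.isPGroup hRq.isPGroup
  obtain ⟨L, hL, hRL⟩ := exists_isCoatom_not_ssResidual_le
    fun h => hR.2.1 (isSupersoluble_iff_ssResidual_eq_bot.1 h)
  let f := (QuotientGroup.mk' K).subgroupComap L
  have hker : f.ker = K.subgroupOf (L.comap (QuotientGroup.mk' K)) := by
    ext x
    rw [MonoidHom.mem_ker, ← OneMemClass.coe_eq_one, mem_subgroupOf]
    exact QuotientGroup.eq_one_iff _
  have hKΦL := hG.subgroupOf_le_frattini_of_le_ssResidual (isCoatom_comap_of_surjective hsurj hL)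
    (by rwa [← map_le_iff_le_comap, map_ssResidual hsurj]) hKR
  have hf_bot := ker_eq_bot_of_le_frattini
    ((QuotientGroup.mk' K).subgroupComap_surjective_of_surjective L hsurj)
    (hker ▸ hKp.isPGroup.comap_subtype) (hker ▸ hKΦL) (hQ.sylow_eq_bot hL hRL hR hRq)
  have hKL : K ≤ L.comap (QuotientGroup.mk' K) :=
    (QuotientGroup.ker_mk' K).ge.trans (ker_le_comap _ L)
  exact hK.2.1 (by rw [← map_subgroupOf_eq_of_le hKL, ← hker, hf_bot, Subgroup.map_bot])

theorem isMinimalNormal_ssResidual (hGs : ¬ IsSupersoluble G) :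
    IsMinimalNormal (ssResidual G) := by
  induction h : Nat.card G using Nat.strong_induction_on generalizing G with
  | _ n ih =>
  subst h
  obtain ⟨V, hVR, hV⟩ := exists_isMinimalNormal_le fun h =>
    hGs (isSupersoluble_iff_ssResidual_eq_bot.2 h)
  have := hV.1
  by_cases hVs : IsSupersoluble (G ⧸ V)
  · rwa [(ssResidual_le (isSupersoluble_quotient_iff.1 hVs)).antisymm hVR]
  · have hQ : IsKUCritical (G ⧸ V) := hG.of_surjective (QuotientGroup.mk'_surjective V)
    exact absurd (ih _ (card_quotient_lt_card hV.2.1) hQ hVs rfl)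
      (hG.not_isMinimalNormal_ssResidual_quotient hV hVR)

end IsKUCritical

section ThreeMaximal

variable {G : Type*} [Group G] [Finite G]

-- Intersecting a chain from `T` to `G` with `Y` gives a chain from `T` to `Y`; take its last proper
-- term.
theorem IsKUSubnormal.exists_isKUStep {T Y : Subgroup G} (hT : IsKUSubnormal T) (hTY : T < Y) :
    ∃ X : Subgroup Y, X ≠ ⊤ ∧ T.subgroupOf Y ≤ X ∧ IsKUStep X := by
  obtain ⟨n, c, h_first, h_last, hc⟩ := hT
  have hTc : ∀ i, T ≤ c i := by
    intro i
    induction i using Fin.induction with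
    | zero => exact h_first.ge
    | succ i ih => exact ih.trans (hc i).1
  obtain ⟨i, hY_succ, hY_castSucc⟩ : ∃ i : Fin n, Y ≤ c i.succ ∧ ¬ Y ≤ c i.castSucc := by
    by_contra! h
    have hYc : ∀ i, Y ≤ c i := by
      intro i
      induction i using Fin.reverseInduction with
      | last => exact h_last ▸ le_top
      | cast i ih => exact h i ih
    exact hTY.not_ge (h_first ▸ hYc 0)
  have hstep : IsKUStep ((c i.castSucc).subgroupOf (c i.succ)) :=
    (hc i).2.imp_right isSupersoluble_quotient_iff.1
  exact ⟨(c i.castSucc).subgroupOf Y, mt subgroupOf_eq_top.1 hY_castSucc, comap_mono (hTc _),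
    hstep.comap (inclusion hY_succ)⟩

variable (h : ∀ H : Subgroup G, IsNMaximal 3 H → IsKUSubnormal H)
include h

theorem isSupersoluble_of_isNMaximal_two {L : Subgroup G} (hL : IsNMaximal 2 L) :
    IsSupersoluble L := by
  refine isSupersoluble_of_forall_isCoatom_isKUStep fun T hT => ?_
  have hcov := isCoatom_iff_map_subtype_covBy.1 hT
  obtain ⟨X, hX, hTX, hstep⟩ :=
    (h _ ⟨L, hL, isMaximalIn_iff_covBy.2 hcov⟩).exists_isKUStep hcov.lt
  have hle : T ≤ X := (comap_map_eq_self_of_injective L.subtype_injective T).ge.trans hTX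
  exact (hT.le_iff.1 hle).resolve_left hX ▸ hstep

theorem isKUCritical_of_isCoatom {M : Subgroup G} (hM : IsCoatom M) : IsKUCritical M := by
  have h_two : ∀ L : Subgroup M, IsCoatom L → IsNMaximal 2 (L.map M.subtype) := fun L hL =>
    ⟨M, ⟨⊤, rfl, isMaximalIn_iff_covBy.2 hM.covBy_top⟩,
      isMaximalIn_iff_covBy.2 (isCoatom_iff_map_subtype_covBy.1 hL)⟩
  refine ⟨fun H hH => ?_, fun L T hL hT => ?_⟩
  · obtain ⟨L, hL, hHL⟩ := (eq_top_or_exists_le_coatom H).resolve_left hH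
    have hLs : IsSupersoluble L := (isSupersoluble_of_isNMaximal_two h (h_two L hL)).of_surjective
      (f := (L.equivMapOfInjective M.subtype M.subtype_injective).symm.toMonoidHom)
      (MulEquiv.surjective _)
    exact (hLs.subgroup (H.subgroupOf L)).of_surjective
      (f := (subgroupOfEquivOfLe hHL).toMonoidHom) (MulEquiv.surjective _)
  · have hcov := map_subtype_covBy_iff.2 hT
    obtain ⟨X, hX, hTX, hstep⟩ :=
      (h _ ⟨_, h_two L hL, isMaximalIn_iff_covBy.2 hcov⟩).exists_isKUStep
        (hcov.lt.trans_le (map_subtype_le L))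
    exact ⟨X, hX, (comap_map_eq_self_of_injective M.subtype_injective T).ge.trans hTX, hstep⟩

end ThreeMaximal

theorem IsKUCritical.isSupersoluble_or_isSDH {G : Type*} [Group G] [Finite G]
    (hG : IsKUCritical G) : IsSupersoluble G ∨ IsSDH G :=
  or_iff_not_imp_left.2 fun hGs =>
    ⟨⟨hGs, hG.isSupersoluble_of_ne_top⟩, hG.isMinimalNormal_ssResidual hGs⟩

/-- If every `3`-maximal subgroup of `G` is `K`-`𝔘`-subnormal in `G`, then every maximal
subgroup of `G` is either supersoluble or an `SDH`-group. -/
theorem maximal_supersoluble_or_SDH_of_3maximal_KUsubnormal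
    (G : Type*) [Group G] [Finite G]
    (h : ∀ H : Subgroup G, IsNMaximal 3 H → IsKUSubnormal H) :
    ∀ M : Subgroup G, IsCoatom M → IsSupersoluble ↥M ∨ IsSDH ↥M :=
  fun _ hM => (isKUCritical_of_isCoatom h hM).isSupersoluble_or_isSDH
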